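/- Let d ≥ 1 be an integer, p > max{1, 2d/(d+2)}, and let q, m be reals with 0 ≤ q < σ − 1 and q < m < σ, where σ = ((p−1)d + p)/(d − p) if p < d and σ = +∞ if p ≥ d. Set γ = [p(m+1)(q+1) + (p/2 − 1)d(m+q) − dqm + (p−1)d] / (d(m−q)). For a function u : ℝ^d → ℝ define J(u) = (∫_{ℝ^d}|u|^{q+1} dx)^{(γ−p/2)/(q+1)} · (∫_{ℝ^d}‖∇u(x)‖^p dx) / (∫_{ℝ^d}|u|^{m+1} dx)^{(γ+p/2)/(m+1)}. Let 𝒜 be the class of continuously differentiable functions u : ℝ^d → ℝ of the form u(x) = f(‖x‖) with f : [0,∞) → [0,∞) nonincreasing, such that 0 < ∫|u|^{q+1} dx < ∞, 0 < ∫|u|^{m+1} dx < ∞, and ∫‖∇u(x)‖^p dx < ∞. Then there exists u₀ ∈ 𝒜 with ∫_{ℝ^d}|u₀|^{q+1} dx = ∫_{ℝ^d}|u₀|^{m+1} dx = 1, J(u₀) = ∫_{ℝ^d}‖∇u₀(x)‖^p dx, and J(u₀) ≤ J(u) for every u ∈ 𝒜. -/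

import Mathlib

open Filter Set Topology MeasureTheory

/-- The scaling-invariant Gagliardo-Nirenberg quotient `J(u)`. -/
noncomputable def GNquot (d : ℕ) (p q m γ : ℝ) (u : EuclideanSpace ℝ (Fin d) → ℝ) : ℝ :=
  (∫ x, |u x| ^ (q + 1)) ^ ((γ - p / 2) / (q + 1)) * (∫ x, ‖fderiv ℝ u x‖ ^ p) /
    (∫ x, |u x| ^ (m + 1)) ^ ((γ + p / 2) / (m + 1))

/-- The class `𝒜` of continuously differentiable, radially nonincreasing,
nonnegative functions with the relevant finite and positive integrals. -/
def RadialClass (d : ℕ) (p q m : ℝ) (u : EuclideanSpace ℝ (Fin d) → ℝ) : Prop :=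
  ContDiff ℝ 1 u ∧
  (∃ f : ℝ → ℝ, (∀ r, 0 ≤ r → 0 ≤ f r) ∧ AntitoneOn f (Set.Ici 0) ∧ ∀ x, u x = f ‖x‖) ∧
  (0 < ∫ x, |u x| ^ (q + 1)) ∧ MeasureTheory.Integrable (fun x => |u x| ^ (q + 1)) ∧
  (0 < ∫ x, |u x| ^ (m + 1)) ∧ MeasureTheory.Integrable (fun x => |u x| ^ (m + 1)) ∧
  MeasureTheory.Integrable (fun x => ‖fderiv ℝ u x‖ ^ p)

/-!
In polar coordinates the problem becomes one-dimensional: minimize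
`(∫ f^(q+1))^a (∫ |f'|^p) / (∫ f^(m+1))^b` against `c r^(d-1) dr` over nonincreasing profiles `f`.
The quotient is invariant under amplitude scaling and dilation, so a minimizing sequence can be
normalized to have both power integrals equal to one. Such a sequence lies below a fixed envelope,
a power of `r` near the origin (from the energy) and another at infinity (from `∫ f^(q+1)`), and
subcriticality makes the `(m+1)`-st power of the envelope integrable. Averaging two members of
the sequence and using the uniform convexity of `t ↦ t^p` shows that the derivatives are Cauchy in
`L^p`, so the sequence converges to a minimizer among locally absolutely continuous profiles.

To see that the minimizer is `C¹` up to the origin, vary its slope `-f'` towards the slope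
`(ψ / (p c r^(d-1)))^(1/(p-1))` obtained by integrating the Euler–Lagrange equation once: by strict
convexity of `t ↦ t^p` the two agree almost everywhere. The formula improves the growth exponent of
`f` at the origin by a fixed amount, and after finitely many iterations `f` is bounded and its slope
continuous and zero at the origin.
-/

section RealInequalities

variable {x y t K n p ε : ℝ}

lemma rpow_convexCombination_le (hx : 0 ≤ x) (hy : 0 ≤ y) (ht : 0 ≤ t) (ht1 : t ≤ 1)
    (hn : 1 ≤ n) : ((1 - t) * x + t * y) ^ n ≤ (1 - t) * x ^ n + t * y ^ n := by
  simpa using (convexOn_rpow hn).2 (mem_Ici.2 hx) (mem_Ici.2 hy) (sub_nonneg.2 ht1) ht (by ring)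

lemma le_add_rpow_mul_rpow (hx : 0 ≤ x) (hK : 0 < K) (hp : 1 ≤ p) :
    x ≤ K + K ^ (1 - p) * x ^ p := by
  rcases le_total x K with hxK | hKx
  · exact hxK.trans (le_add_of_nonneg_right (by positivity))
  · have hx0 : 0 < x := hK.trans_le hKx
    calc x = x ^ (1 - p) * x ^ p := by rw [← Real.rpow_add hx0]; simp
      _ ≤ K ^ (1 - p) * x ^ p := by
        gcongr ?_ * _
        exact Real.rpow_le_rpow_of_nonpos hK hKx (by linarith)
      _ ≤ K + K ^ (1 - p) * x ^ p := le_add_of_nonneg_left hK.le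

lemma one_lt_midpoint_rpow (hp : 1 < p) (ht : t ∈ Icc (-1) 1) (ht0 : t ≠ 0) :
    1 < ((1 + t) ^ p + (1 - t) ^ p) / 2 := by
  have hconv := (strictConvexOn_rpow hp).2 (show 1 + t ∈ Ici 0 by simpa using by linarith [ht.1])
    (show 1 - t ∈ Ici 0 by simpa using ht.2) (fun h => ht0 (by linarith))
    one_half_pos one_half_pos (by norm_num)
  simp only [smul_eq_mul] at hconv
  rw [show (1 / 2 : ℝ) * (1 + t) + 1 / 2 * (1 - t) = 1 by ring, Real.one_rpow] at hconv
  linarith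

lemma one_le_midpoint_rpow (hp : 1 < p) (ht : t ∈ Icc (-1) 1) :
    1 ≤ ((1 + t) ^ p + (1 - t) ^ p) / 2 := by
  rcases eq_or_ne t 0 with rfl | ht0
  · simp
  · exact (one_lt_midpoint_rpow hp ht ht0).le

lemma exists_midpoint_rpow_gap (hp : 1 < p) (hε : 0 < ε) :
    ∃ δ > 0, ∀ t ∈ Icc (-1 : ℝ) 1, ε ≤ |2 * t| ^ p → δ ≤ ((1 + t) ^ p + (1 - t) ^ p) / 2 - 1 := by
  have hp0 : 0 ≤ p := by linarith
  have hcont : Continuous fun t : ℝ => ((1 + t) ^ p + (1 - t) ^ p) / 2 - 1 := by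
    fun_prop (disch := exact hp0)
  have hclosed : IsClosed {t : ℝ | ε ≤ |2 * t| ^ p} :=
    isClosed_le continuous_const (by fun_prop (disch := exact hp0))
  rcases (Icc (-1 : ℝ) 1 ∩ {t | ε ≤ |2 * t| ^ p}).eq_empty_or_nonempty with hempty | hne
  · exact ⟨1, one_pos, fun t ht hεt => (hempty.le ⟨ht, hεt⟩).elim⟩
  · obtain ⟨t₀, ht₀, hmin⟩ := (isCompact_Icc.inter_right hclosed).exists_isMinOn hne
      hcont.continuousOn
    have ht₀0 : t₀ ≠ 0 := by
      rintro rfl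
      have : ε ≤ 0 := by simpa [Real.zero_rpow (by linarith : p ≠ 0)] using ht₀.2
      linarith
    exact ⟨_, sub_pos.2 (one_lt_midpoint_rpow hp ht₀.1 ht₀0), fun t ht hεt => hmin ⟨ht, hεt⟩⟩

lemma exists_abs_two_mul_rpow_le (hp : 1 < p) (hε : 0 < ε) :
    ∃ C ≥ 0, ∀ t ∈ Icc (-1 : ℝ) 1, |2 * t| ^ p ≤
      ε * ((1 + t) ^ p + (1 - t) ^ p) + C * (((1 + t) ^ p + (1 - t) ^ p) / 2 - 1) := by
  obtain ⟨δ, hδ, hgap⟩ := exists_midpoint_rpow_gap hp (show 0 < ε * 2 by positivity)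
  refine ⟨2 ^ p / δ, by positivity, fun t ht => ?_⟩
  have hmid := one_le_midpoint_rpow hp ht
  rcases le_total (ε * 2) (|2 * t| ^ p) with hlarge | hsmall
  · have hub : |2 * t| ^ p ≤ 2 ^ p := by
      gcongr
      exact abs_le.2 ⟨by linarith [ht.1], by linarith [ht.2]⟩
    have hC : 2 ^ p ≤ 2 ^ p / δ * (((1 + t) ^ p + (1 - t) ^ p) / 2 - 1) := by
      rw [div_mul_eq_mul_div, le_div_iff₀ hδ]
      gcongr
      exact hgap t ht hlarge
    nlinarith
  · have hC : 0 ≤ 2 ^ p / δ * (((1 + t) ^ p + (1 - t) ^ p) / 2 - 1) :=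
      mul_nonneg (by positivity) (by linarith)
    nlinarith

lemma exists_abs_sub_rpow_le (hp : 1 < p) (hε : 0 < ε) :
    ∃ C ≥ 0, ∀ x y : ℝ, 0 ≤ x → 0 ≤ y → |x - y| ^ p ≤
      ε * (x ^ p + y ^ p) + C * ((x ^ p + y ^ p) / 2 - ((x + y) / 2) ^ p) := by
  obtain ⟨C, hC, hbound⟩ := exists_abs_two_mul_rpow_le hp hε
  refine ⟨C, hC, fun x y hx hy => ?_⟩
  rcases (add_nonneg hx hy).eq_or_lt with hsum | hsum
  · obtain ⟨rfl, rfl⟩ : x = 0 ∧ y = 0 := ⟨by linarith, by linarith⟩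
    simp [Real.zero_rpow (by linarith : p ≠ 0)]
  obtain ⟨s, t, hs, ht, rfl, rfl⟩ : ∃ s t : ℝ, 0 < s ∧ t ∈ Icc (-1) 1 ∧
      x = s * (1 + t) ∧ y = s * (1 - t) := by
    refine ⟨(x + y) / 2, (x - y) / (x + y), by positivity, ⟨?_, ?_⟩, ?_, ?_⟩
    · rw [le_div_iff₀ hsum]; linarith
    · rw [div_le_iff₀ hsum]; linarith
    · field_simp; ring
    · field_simp; ring
  rw [show s * (1 + t) - s * (1 - t) = s * (2 * t) by ring, abs_mul, abs_of_pos hs,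
    show (s * (1 + t) + s * (1 - t)) / 2 = s by ring, Real.mul_rpow hs.le (abs_nonneg _),
    Real.mul_rpow hs.le (by linarith [ht.1]), Real.mul_rpow hs.le (by linarith [ht.2])]
  linarith [mul_le_mul_of_nonneg_left (hbound t ht) (Real.rpow_nonneg hs.le p)]

lemma abs_slope_rpow_convexCombination_le (hx : 0 ≤ x) (hy : 0 ≤ y) (hn : 1 ≤ n) (ht : 0 < t)
    (ht1 : t ≤ 1) : |t⁻¹ * (((1 - t) * x + t * y) ^ n - x ^ n)| ≤ y ^ n + n * x ^ n := by
  have hupper := rpow_convexCombination_le hx hy ht.le ht1 hn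
  have hlower : (1 - n * t) * x ^ n ≤ ((1 - t) * x + t * y) ^ n := calc
    (1 - n * t) * x ^ n ≤ (1 - t) ^ n * x ^ n := by
      gcongr
      simpa [sub_eq_add_neg] using one_add_mul_self_le_rpow_one_add (s := -t) (by linarith) hn
    _ = ((1 - t) * x) ^ n := (Real.mul_rpow (sub_nonneg.2 ht1) hx).symm
    _ ≤ _ := Real.rpow_le_rpow (mul_nonneg (sub_nonneg.2 ht1) hx)
      (le_add_of_nonneg_right (by positivity)) (by linarith)
  have hyn : 0 ≤ y ^ n := by positivity
  have hnxt : 0 ≤ n * x ^ n * t := by positivity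
  rw [inv_mul_eq_div, abs_le, le_div_iff₀ ht, div_le_iff₀ ht]
  constructor <;> nlinarith

lemma tendsto_slope_rpow_convexCombination (hn : 1 ≤ n) :
    Tendsto (fun t : ℝ => t⁻¹ * (((1 - t) * x + t * y) ^ n - x ^ n)) (𝓝[>] 0)
      (𝓝 (n * (x ^ (n - 1) * (y - x)))) := by
  have hline : HasDerivAt (fun t : ℝ => (1 - t) * x + t * y) (y - x) 0 :=
    ((((hasDerivAt_id (0 : ℝ)).const_sub 1).mul_const x).add
      ((hasDerivAt_id (0 : ℝ)).mul_const y)).congr_deriv (by ring)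
  have hslope := (hline.rpow_const (p := n) (Or.inr hn)).tendsto_slope_zero_right
  simp only [zero_add, smul_eq_mul, sub_zero, one_mul, zero_mul, add_zero] at hslope
  convert hslope using 2
  ring

end RealInequalities

section PowerIntegrals

variable {α : Type*} [MeasurableSpace α] {μ : Measure α} {X Y : α → ℝ} {n p t : ℝ}

lemma integrable_rpow_convexCombination (hn : 1 ≤ n) (hX : 0 ≤ᵐ[μ] X) (hY : 0 ≤ᵐ[μ] Y)
    (hXm : AEMeasurable X μ) (hYm : AEMeasurable Y μ) (hXi : Integrable (fun x => X x ^ n) μ)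
    (hYi : Integrable (fun x => Y x ^ n) μ) (ht : 0 ≤ t) (ht1 : t ≤ 1) :
    Integrable (fun x => ((1 - t) * X x + t * Y x) ^ n) μ := by
  refine Integrable.mono' ((hXi.const_mul (1 - t)).add (hYi.const_mul t))
    (((hXm.const_mul _).add (hYm.const_mul _)).pow_const n).aestronglyMeasurable ?_
  filter_upwards [hX, hY] with x hx hy
  have hnonneg : 0 ≤ (1 - t) * X x + t * Y x :=
    add_nonneg (mul_nonneg (sub_nonneg.2 ht1) hx) (mul_nonneg ht hy)
  rw [Real.norm_of_nonneg (by positivity)]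
  exact rpow_convexCombination_le hx hy ht ht1 hn

lemma integral_rpow_convexCombination_le (hn : 1 ≤ n) (hX : 0 ≤ᵐ[μ] X) (hY : 0 ≤ᵐ[μ] Y)
    (hXm : AEMeasurable X μ) (hYm : AEMeasurable Y μ) (hXi : Integrable (fun x => X x ^ n) μ)
    (hYi : Integrable (fun x => Y x ^ n) μ) (ht : 0 ≤ t) (ht1 : t ≤ 1) :
    ∫ x, ((1 - t) * X x + t * Y x) ^ n ∂μ ≤
      (1 - t) * ∫ x, X x ^ n ∂μ + t * ∫ x, Y x ^ n ∂μ := by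
  rw [← integral_const_mul, ← integral_const_mul,
    ← integral_add (hXi.const_mul _) (hYi.const_mul _)]
  refine integral_mono_ae (integrable_rpow_convexCombination hn hX hY hXm hYm hXi hYi ht ht1)
    ((hXi.const_mul _).add (hYi.const_mul _)) ?_
  filter_upwards [hX, hY] with x hx hy
  exact rpow_convexCombination_le hx hy ht ht1 hn

lemma eventually_pos_and_le_one_nhdsGT_zero : ∀ᶠ t : ℝ in 𝓝[>] 0, 0 < t ∧ t ≤ 1 :=
  (Ioc_mem_nhdsGT one_pos : Ioc (0 : ℝ) 1 ∈ 𝓝[>] 0)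

lemma integrable_rpow_sub_one_mul_sub (hn : 1 ≤ n) (hX : 0 ≤ᵐ[μ] X) (hY : 0 ≤ᵐ[μ] Y)
    (hXm : AEMeasurable X μ) (hYm : AEMeasurable Y μ) (hXi : Integrable (fun x => X x ^ n) μ)
    (hYi : Integrable (fun x => Y x ^ n) μ) :
    Integrable (fun x => X x ^ (n - 1) * (Y x - X x)) μ := by
  have hn0 : n ≠ 0 := by linarith
  rw [← integrable_const_mul_iff (isUnit_iff_ne_zero.2 hn0)]
  refine Integrable.mono' (hYi.add (hXi.const_mul n))
    (((hXm.pow_const _).mul (hYm.sub hXm)).const_mul n).aestronglyMeasurable ?_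
  filter_upwards [hX, hY] with x hx hy
  refine le_of_tendsto (tendsto_slope_rpow_convexCombination hn).norm ?_
  filter_upwards [eventually_pos_and_le_one_nhdsGT_zero] with t ht
  exact abs_slope_rpow_convexCombination_le hx hy hn ht.1 ht.2

lemma hasDerivWithinAt_integral_rpow_convexCombination (hn : 1 ≤ n) (hX : 0 ≤ᵐ[μ] X)
    (hY : 0 ≤ᵐ[μ] Y) (hXm : AEMeasurable X μ) (hYm : AEMeasurable Y μ)
    (hXi : Integrable (fun x => X x ^ n) μ) (hYi : Integrable (fun x => Y x ^ n) μ) :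
    HasDerivWithinAt (fun t => ∫ x, ((1 - t) * X x + t * Y x) ^ n ∂μ)
      (n * ∫ x, X x ^ (n - 1) * (Y x - X x) ∂μ) (Ioi 0) 0 := by
  rw [hasDerivWithinAt_iff_tendsto_slope' (by simp), ← integral_const_mul]
  have hlim : Tendsto (fun t : ℝ => ∫ x, t⁻¹ * (((1 - t) * X x + t * Y x) ^ n - X x ^ n) ∂μ)
      (𝓝[>] 0) (𝓝 (∫ x, n * (X x ^ (n - 1) * (Y x - X x)) ∂μ)) := by
    refine tendsto_integral_filter_of_dominated_convergence _ (Eventually.of_forall fun t => ?_)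
      ?_ (hYi.add (hXi.const_mul n))
      (Eventually.of_forall fun x => tendsto_slope_rpow_convexCombination hn)
    · exact (((((hXm.const_mul _).add (hYm.const_mul _)).pow_const n).sub
        (hXm.pow_const n)).const_mul _).aestronglyMeasurable
    · filter_upwards [eventually_pos_and_le_one_nhdsGT_zero] with t ht
      filter_upwards [hX, hY] with x hx hy
      exact abs_slope_rpow_convexCombination_le hx hy hn ht.1 ht.2
  refine hlim.congr' ?_
  filter_upwards [eventually_pos_and_le_one_nhdsGT_zero] with t ht
  rw [integral_const_mul, integral_sub
    (integrable_rpow_convexCombination hn hX hY hXm hYm hXi hYi ht.1.le ht.2) hXi,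
    slope_def_field, inv_mul_eq_div]
  simp

lemma integral_rpow_pos_of_integral_rpow_pos {k : ℝ} (hn : n ≠ 0) (hk : k ≠ 0)
    (hX : 0 ≤ᵐ[μ] X) (hXi : Integrable (fun x => X x ^ n) μ) (hpos : 0 < ∫ x, X x ^ k ∂μ) :
    0 < ∫ x, X x ^ n ∂μ := by
  have hXn : 0 ≤ᵐ[μ] fun x => X x ^ n := hX.mono fun x hx => Real.rpow_nonneg hx _
  refine (integral_nonneg_of_ae hXn).lt_of_ne' fun hzero => hpos.ne' (integral_eq_zero_of_ae ?_)
  filter_upwards [hX, (integral_eq_zero_iff_of_nonneg_ae hXn hXi).1 hzero] with x hx hxn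
  have hx0 : X x = 0 := (Real.rpow_eq_zero hx hn).1 hxn
  simp [hx0, Real.zero_rpow hk]

lemma integral_le_measureReal_rpow_mul [IsFiniteMeasure μ] (hp : 1 < p) (hX : 0 ≤ᵐ[μ] X)
    (hXm : AEMeasurable X μ) (hXi : Integrable (fun x => X x ^ p) μ) :
    ∫ x, X x ∂μ ≤ μ.real univ ^ (1 - 1 / p) * (∫ x, X x ^ p ∂μ) ^ (1 / p) := by
  have hconj := Real.HolderConjugate.conjExponent hp
  have hp0 : 0 < p := by linarith
  have hmem : MemLp X (ENNReal.ofReal p) μ := by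
    rw [← integrable_norm_rpow_iff hXm.aestronglyMeasurable (by simpa using hp0) (by simp),
      ENNReal.toReal_ofReal hp0.le]
    refine hXi.congr (hX.mono fun x hx => ?_)
    simp only [Real.norm_of_nonneg hx]
  have hholder := integral_mul_le_Lp_mul_Lq_of_nonneg hconj.symm
    (Eventually.of_forall fun _ => zero_le_one) hX (memLp_const (μ := μ) (1 : ℝ)) hmem
  have hexp : 1 / p.conjExponent = 1 - 1 / p := by
    simpa [one_div] using hconj.one_sub_inv.symm
  simpa [hexp] using hholder

lemma integrable_of_integrable_rpow [IsFiniteMeasure μ] (hp : 1 ≤ p) (hX : 0 ≤ᵐ[μ] X)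
    (hXm : AEMeasurable X μ) (hXi : Integrable (fun x => X x ^ p) μ) : Integrable X μ := by
  refine Integrable.mono' ((integrable_const (1 : ℝ)).add hXi) hXm.aestronglyMeasurable ?_
  filter_upwards [hX] with x hx
  simpa [Real.norm_of_nonneg hx] using le_add_rpow_mul_rpow hx one_pos hp

end PowerIntegrals

section IntegralLimits

variable {α : Type*} [MeasurableSpace α] {μ : Measure α} {n p : ℝ}

lemma integrable_and_integral_le_of_tendsto {X : ℕ → α → ℝ} {Y : α → ℝ} {B : ℝ}
    (hX : ∀ k, 0 ≤ᵐ[μ] X k) (hXi : ∀ k, Integrable (X k) μ)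
    (hlim : ∀ᵐ x ∂μ, Tendsto (fun k => X k x) atTop (𝓝 (Y x))) (hB : ∀ k, ∫ x, X k x ∂μ ≤ B) :
    Integrable Y μ ∧ ∫ x, Y x ∂μ ≤ B := by
  have hB0 : 0 ≤ B := (integral_nonneg_of_ae (hX 0)).trans (hB 0)
  have hY : 0 ≤ᵐ[μ] Y := by
    filter_upwards [hlim, ae_all_iff.2 hX] with x hx h using ge_of_tendsto' hx h
  have hYm : AEStronglyMeasurable Y μ :=
    aestronglyMeasurable_of_tendsto_ae atTop (fun k => (hXi k).1) hlim
  have hlintegral : ∫⁻ x, ENNReal.ofReal (Y x) ∂μ ≤ ENNReal.ofReal B := calc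
    ∫⁻ x, ENNReal.ofReal (Y x) ∂μ
      = ∫⁻ x, liminf (fun k => ENNReal.ofReal (X k x)) atTop ∂μ := by
        refine lintegral_congr_ae (hlim.mono fun x hx => ?_)
        exact ((ENNReal.continuous_ofReal.tendsto _).comp hx).liminf_eq.symm
    _ ≤ liminf (fun k => ∫⁻ x, ENNReal.ofReal (X k x) ∂μ) atTop :=
        lintegral_liminf_le' fun k => (hXi k).1.aemeasurable.ennreal_ofReal
    _ ≤ ENNReal.ofReal B := by
        refine liminf_le_of_le (by isBoundedDefault) fun b hb => ?_
        obtain ⟨k, hk⟩ := hb.exists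
        rw [← ofReal_integral_eq_lintegral_ofReal (hXi k) (hX k)] at hk
        exact hk.trans (ENNReal.ofReal_le_ofReal (hB k))
  have hYi : Integrable Y μ :=
    ⟨hYm, (hasFiniteIntegral_iff_ofReal hY).2 (hlintegral.trans_lt ENNReal.ofReal_lt_top)⟩
  rw [← ofReal_integral_eq_lintegral_ofReal hYi hY] at hlintegral
  exact ⟨hYi, (ENNReal.ofReal_le_ofReal_iff hB0).1 hlintegral⟩

lemma tendsto_integral_rpow_of_le {ι : Type*} {l : Filter ι} [l.IsCountablyGenerated]
    {X : ι → α → ℝ} {Y E : α → ℝ} (hn : 0 ≤ n) (hXm : ∀ i, AEMeasurable (X i) μ)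
    (hX : ∀ i, 0 ≤ᵐ[μ] X i) (hXE : ∀ i, X i ≤ᵐ[μ] E) (hE : Integrable (fun x => E x ^ n) μ)
    (hlim : ∀ᵐ x ∂μ, Tendsto (fun i => X i x) l (𝓝 (Y x))) :
    Tendsto (fun i => ∫ x, X i x ^ n ∂μ) l (𝓝 (∫ x, Y x ^ n ∂μ)) := by
  refine tendsto_integral_filter_of_dominated_convergence _
    (Eventually.of_forall fun i => ((hXm i).pow_const n).aestronglyMeasurable)
    (Eventually.of_forall fun i => ?_) hE (hlim.mono fun x hx => hx.rpow_const (Or.inr hn))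
  filter_upwards [hX i, hXE i] with x hx hxE
  rw [Real.norm_of_nonneg (Real.rpow_nonneg hx _)]
  exact Real.rpow_le_rpow hx hxE hn

lemma integrable_rpow_of_le {X E : α → ℝ} (hn : 0 ≤ n) (hXm : AEMeasurable X μ)
    (hX : 0 ≤ᵐ[μ] X) (hXE : X ≤ᵐ[μ] E) (hE : Integrable (fun x => E x ^ n) μ) :
    Integrable (fun x => X x ^ n) μ := by
  refine Integrable.mono' hE (hXm.pow_const n).aestronglyMeasurable ?_
  filter_upwards [hX, hXE] with x hx hxE
  rw [Real.norm_of_nonneg (Real.rpow_nonneg hx _)]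
  exact Real.rpow_le_rpow hx hxE hn

lemma lp_norm_rpow_eq_integral (hp : 0 < p) {f : Lp ℝ (ENNReal.ofReal p) μ} {X : α → ℝ}
    (hfX : f =ᵐ[μ] X) : ‖f‖ ^ p = ∫ x, |X x| ^ p ∂μ := by
  rw [Lp.norm_def, (Lp.memLp f).eLpNorm_eq_integral_rpow_norm (by simpa using hp) (by simp),
    ENNReal.toReal_ofReal hp.le, ENNReal.toReal_ofReal (by positivity),
    ← Real.rpow_mul (by positivity), inv_mul_cancel₀ hp.ne', Real.rpow_one]
  refine integral_congr_ae (hfX.mono fun x hx => ?_)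
  simp only [hx, Real.norm_eq_abs]

lemma memLp_iff_integrable_abs_rpow (hp : 0 < p) {X : α → ℝ} (hXm : AEStronglyMeasurable X μ) :
    MemLp X (ENNReal.ofReal p) μ ↔ Integrable (fun x => |X x| ^ p) μ := by
  rw [← integrable_norm_rpow_iff hXm (by simpa using hp) (by simp), ENNReal.toReal_ofReal hp.le]
  rfl

lemma exists_tendsto_integral_abs_sub_rpow_zero (hp : 1 ≤ p) {X : ℕ → α → ℝ}
    (hX : ∀ k x, 0 ≤ X k x) (hXm : ∀ k, Measurable (X k))
    (hXi : ∀ k, Integrable (fun x => X k x ^ p) μ)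
    (hcauchy : Tendsto (fun z : ℕ × ℕ => ∫ x, |X z.1 x - X z.2 x| ^ p ∂μ) atTop (𝓝 0)) :
    ∃ Y : α → ℝ, Measurable Y ∧ (∀ x, 0 ≤ Y x) ∧ Integrable (fun x => Y x ^ p) μ ∧
      (∀ k, Integrable (fun x => |X k x - Y x| ^ p) μ) ∧
      Tendsto (fun k => ∫ x, |X k x - Y x| ^ p ∂μ) atTop (𝓝 0) ∧
      Tendsto (fun k => ∫ x, X k x ^ p ∂μ) atTop (𝓝 (∫ x, Y x ^ p ∂μ)) := by
  have hp0 : 0 < p := by linarith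
  have : Fact (1 ≤ ENNReal.ofReal p) := ⟨by simpa using hp⟩
  have hmem : ∀ k, MemLp (X k) (ENNReal.ofReal p) μ := fun k =>
    (memLp_iff_integrable_abs_rpow hp0 (hXm k).aestronglyMeasurable).2
      (by simpa only [abs_of_nonneg (hX k _)] using hXi k)
  set f : ℕ → Lp ℝ (ENNReal.ofReal p) μ := fun k => (hmem k).toLp (X k)
  have hf : ∀ k, f k =ᵐ[μ] X k := fun k => (hmem k).coeFn_toLp
  have hf_cauchy : CauchySeq f := by
    rw [cauchySeq_iff_tendsto_dist_atTop_0]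
    have hroot := hcauchy.rpow_const (p := p⁻¹) (Or.inr (by positivity))
    rw [Real.zero_rpow (by positivity)] at hroot
    refine hroot.congr fun z => ?_
    have hdiff : ⇑(f z.1 - f z.2) =ᵐ[μ] fun x => X z.1 x - X z.2 x :=
      (Lp.coeFn_sub _ _).trans ((hf z.1).sub (hf z.2))
    rw [← lp_norm_rpow_eq_integral hp0 hdiff, Real.rpow_rpow_inv (norm_nonneg _) hp0.ne',
      dist_eq_norm]
  obtain ⟨F, hF⟩ := cauchySeq_tendsto_of_complete hf_cauchy
  have hF0 : 0 ≤ᵐ[μ] F := (Lp.coeFn_nonneg F).2 <| ge_of_tendsto' hF fun k =>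
    (Lp.coeFn_nonneg _).1 ((hf k).symm.rw (fun _ y => 0 ≤ y) (Eventually.of_forall (hX k)))
  have hFY : F =ᵐ[μ] fun x => max (F x) 0 := hF0.mono fun x hx => (max_eq_left hx).symm
  have hdiff : ∀ k, ⇑(f k - F) =ᵐ[μ] fun x => X k x - max (F x) 0 := fun k =>
    (Lp.coeFn_sub _ _).trans ((hf k).sub hFY)
  have hYm : Measurable fun x => max (F x) 0 :=
    (Lp.stronglyMeasurable F).measurable.max measurable_const
  have hY_abs : ∀ x, |max (F x) 0| = max (F x) 0 := fun x => abs_of_nonneg (le_max_right _ _)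
  refine ⟨fun x => max (F x) 0, hYm, fun x => le_max_right _ _, ?_, fun k => ?_, ?_, ?_⟩
  · simpa only [hY_abs] using (memLp_iff_integrable_abs_rpow hp0 hYm.aestronglyMeasurable).1
      ((memLp_congr_ae hFY).1 (Lp.memLp F))
  · exact (memLp_iff_integrable_abs_rpow hp0 ((hXm k).sub hYm).aestronglyMeasurable).1
      ((memLp_congr_ae (hdiff k)).1 (Lp.memLp (f k - F)))
  · have hnorm := (tendsto_iff_norm_sub_tendsto_zero.1 hF).rpow_const (p := p) (Or.inr hp0.le)
    simpa only [lp_norm_rpow_eq_integral hp0 (hdiff _), Real.zero_rpow hp0.ne'] using hnorm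
  · have hnorm := hF.norm.rpow_const (p := p) (Or.inr hp0.le)
    simpa only [lp_norm_rpow_eq_integral hp0 (hf _), lp_norm_rpow_eq_integral hp0 hFY,
      abs_of_nonneg (hX _ _), hY_abs] using hnorm

end IntegralLimits

section ClarksonCauchy

variable {α : Type*} [MeasurableSpace α] {μ : Measure α} {p β : ℝ} {X : ℕ → α → ℝ}

lemma integral_abs_sub_rpow_le {ε C : ℝ} {X Y : α → ℝ}
    (hC : ∀ x y : ℝ, 0 ≤ x → 0 ≤ y → |x - y| ^ p ≤
      ε * (x ^ p + y ^ p) + C * ((x ^ p + y ^ p) / 2 - ((x + y) / 2) ^ p))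
    (hX : ∀ x, 0 ≤ X x) (hY : ∀ x, 0 ≤ Y x)
    (hXi : Integrable (fun x => X x ^ p) μ) (hYi : Integrable (fun x => Y x ^ p) μ)
    (hmid : Integrable (fun x => ((X x + Y x) / 2) ^ p) μ) :
    ∫ x, |X x - Y x| ^ p ∂μ ≤ ε * (∫ x, X x ^ p ∂μ + ∫ x, Y x ^ p ∂μ) +
      C * ((∫ x, X x ^ p ∂μ + ∫ x, Y x ^ p ∂μ) / 2 - ∫ x, ((X x + Y x) / 2) ^ p ∂μ) := by
  have hsum : Integrable (fun x => X x ^ p + Y x ^ p) μ := hXi.add hYi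
  have hgap : Integrable (fun x => (X x ^ p + Y x ^ p) / 2 - ((X x + Y x) / 2) ^ p) μ :=
    (hsum.div_const 2).sub hmid
  rw [← integral_add hXi hYi, ← integral_div, ← integral_sub (hsum.div_const 2) hmid,
    ← integral_const_mul, ← integral_const_mul,
    ← integral_add (hsum.const_mul ε) (hgap.const_mul C)]
  exact integral_mono_of_nonneg (Eventually.of_forall fun x => by positivity)
    ((hsum.const_mul ε).add (hgap.const_mul C)) (Eventually.of_forall fun x => hC _ _ (hX x) (hY x))

lemma tendsto_fst_snd_prod_atTop {u : ℕ → ℝ} (hu : Tendsto u atTop (𝓝 β)) :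
    Tendsto (fun z : ℕ × ℕ => u z.1) atTop (𝓝 β) ∧
      Tendsto (fun z : ℕ × ℕ => u z.2) atTop (𝓝 β) := by
  rw [← prod_atTop_atTop_eq]
  exact ⟨hu.comp tendsto_fst, hu.comp tendsto_snd⟩

-- This is the uniform convexity of `L^p`, applied along a sequence.
lemma tendsto_integral_abs_sub_rpow_zero (hp : 1 < p) (hX : ∀ k x, 0 ≤ X k x)
    (hXi : ∀ k, Integrable (fun x => X k x ^ p) μ)
    (hmid : ∀ z : ℕ × ℕ, Integrable (fun x => ((X z.1 x + X z.2 x) / 2) ^ p) μ)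
    (hlim : Tendsto (fun k => ∫ x, X k x ^ p ∂μ) atTop (𝓝 β)) {b : ℕ × ℕ → ℝ}
    (hb : ∀ z, b z ≤ ∫ x, ((X z.1 x + X z.2 x) / 2) ^ p ∂μ) (hb_lim : Tendsto b atTop (𝓝 β)) :
    Tendsto (fun z : ℕ × ℕ => ∫ x, |X z.1 x - X z.2 x| ^ p ∂μ) atTop (𝓝 0) := by
  have hβ : 0 ≤ β := ge_of_tendsto' hlim fun k =>
    integral_nonneg fun x => Real.rpow_nonneg (hX k x) p
  obtain ⟨hlim₁, hlim₂⟩ := tendsto_fst_snd_prod_atTop hlim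
  refine tendsto_order.2 ⟨fun a ha => Eventually.of_forall fun z => ha.trans_le (by positivity),
    fun δ hδ => ?_⟩
  obtain ⟨ε, hε, hεδ⟩ : ∃ ε > 0, ε * (β + β) < δ :=
    ⟨δ / (2 * (β + β + 1)), by positivity, by
      rw [div_mul_eq_mul_div, div_lt_iff₀ (by positivity)]; nlinarith⟩
  obtain ⟨C, hC, hbound⟩ := exists_abs_sub_rpow_le hp hε
  have hmajorant := ((hlim₁.add hlim₂).const_mul ε).add
    ((((hlim₁.add hlim₂).div_const 2).sub hb_lim).const_mul C)
  filter_upwards [hmajorant.eventually_lt_const (u := δ) (by simpa using hεδ)] with z hz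
  refine lt_of_le_of_lt ((integral_abs_sub_rpow_le hbound (hX z.1) (hX z.2) (hXi z.1) (hXi z.2)
    (hmid z)).trans ?_) hz
  gcongr
  exact hb z

end ClarksonCauchy

section Selection

lemma cauchySeq_of_equicontinuous_of_dense {X : Type*} [TopologicalSpace X] {f : ℕ → X → ℝ}
    (hf : Equicontinuous f) {S : Set X} (hS : Dense S) (hcauchy : ∀ x ∈ S, CauchySeq (f · x))
    (x : X) : CauchySeq (f · x) := by
  rw [Metric.cauchySeq_iff']
  intro ε hε
  obtain ⟨y, hyS, hy⟩ := hS.inter_nhds_nonempty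
    (Metric.equicontinuousAt_iff_right.1 (hf x) (ε / 3) (by positivity))
  obtain ⟨N, hN⟩ := Metric.cauchySeq_iff'.1 (hcauchy y hyS) (ε / 3) (by positivity)
  refine ⟨N, fun k hk => ?_⟩
  calc dist (f k x) (f N x)
      ≤ dist (f k x) (f k y) + dist (f k y) (f N y) + dist (f N y) (f N x) := dist_triangle4 _ _ _ _
    _ < ε / 3 + ε / 3 + ε / 3 := by
      gcongr
      · exact hy k
      · exact hN k hk
      · rw [dist_comm]; exact hy N
    _ = ε := by ring

lemma exists_subseq_tendsto_of_equicontinuous {X : Type*} [TopologicalSpace X]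
    [TopologicalSpace.SeparableSpace X] {f : ℕ → X → ℝ} (hf : Equicontinuous f) {B : X → ℝ}
    (hB : ∀ k x, |f k x| ≤ B x) :
    ∃ φ : ℕ → ℕ, StrictMono φ ∧ ∃ F : X → ℝ, ∀ x, Tendsto (fun k => f (φ k) x) atTop (𝓝 (F x)) := by
  obtain ⟨S, hS, hSd⟩ := TopologicalSpace.exists_countable_dense X
  have := hS.to_subtype
  have hcompact : IsCompact (pi univ fun x : S => Icc (-B x) (B x)) :=
    isCompact_univ_pi fun x => isCompact_Icc
  obtain ⟨F₀, -, φ, hφ, hlim⟩ := hcompact.tendsto_subseq (x := fun k (x : S) => f k x)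
    fun k x _ => abs_le.1 (hB k x)
  have hcauchy := cauchySeq_of_equicontinuous_of_dense (hf.comp φ) hSd
    fun x hx => (tendsto_pi_nhds.1 hlim ⟨x, hx⟩).cauchySeq
  choose F hF using fun x => cauchySeq_tendsto_of_complete (hcauchy x)
  exact ⟨φ, hφ, F, hF⟩

end Selection

/-! ### Radial measures on the half-line -/

/-- The measure `c r ^ (D - 1) dr` on `(0, ∞)`. For `D = d` and a suitable `c` it is the law of
`‖x‖` under Lebesgue measure on `ℝ^d`, so that integrals of radial functions become integrals
against it. -/
noncomputable def radialMeasure (c D : ℝ) : Measure ℝ :=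
  (volume.restrict (Ioi 0)).withDensity (fun r => ENNReal.ofReal (c * r ^ (D - 1)))

section RadialMeasure

variable {c D : ℝ} {s : Set ℝ} {F : ℝ → ℝ}

lemma radialMeasure_restrict_of_subset (hs : MeasurableSet s) (hs0 : s ⊆ Ioi 0) :
    (radialMeasure c D).restrict s =
      (volume.restrict s).withDensity (fun r => ENNReal.ofReal (c * r ^ (D - 1))) := by
  rw [radialMeasure, restrict_withDensity hs, Measure.restrict_restrict hs,
    inter_eq_left.2 hs0]

lemma radialMeasure_restrict_Ioi_zero :
    (radialMeasure c D).restrict (Ioi 0) = radialMeasure c D :=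
  radialMeasure_restrict_of_subset measurableSet_Ioi subset_rfl

lemma setIntegral_radialMeasure (hc : 0 < c) (hs : MeasurableSet s) (hs0 : s ⊆ Ioi 0) :
    ∫ r in s, F r ∂radialMeasure c D = ∫ r in s, c * r ^ (D - 1) * F r := by
  rw [radialMeasure_restrict_of_subset hs hs0,
    integral_withDensity_eq_integral_toReal_smul (by fun_prop) (by simp)]
  refine setIntegral_congr_fun hs fun r hr => ?_
  have hr : 0 < r := hs0 hr
  simp only [smul_eq_mul]
  rw [ENNReal.toReal_ofReal (by positivity)]

lemma integrableOn_radialMeasure_iff (hc : 0 < c) (hs : MeasurableSet s) (hs0 : s ⊆ Ioi 0) :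
    IntegrableOn F s (radialMeasure c D) ↔ IntegrableOn (fun r => c * r ^ (D - 1) * F r) s := by
  rw [IntegrableOn, radialMeasure_restrict_of_subset hs hs0,
    integrable_withDensity_iff_integrable_smul' (by fun_prop) (by simp)]
  refine integrableOn_congr_fun (fun r hr => ?_) hs
  have hr : 0 < r := hs0 hr
  simp only [smul_eq_mul]
  rw [ENNReal.toReal_ofReal (by positivity)]

lemma integral_radialMeasure (hc : 0 < c) :
    ∫ r, F r ∂radialMeasure c D = ∫ r in Ioi 0, c * r ^ (D - 1) * F r := by
  rw [← setIntegral_radialMeasure hc measurableSet_Ioi subset_rfl,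
    radialMeasure_restrict_Ioi_zero]

lemma integrable_radialMeasure_iff (hc : 0 < c) :
    Integrable F (radialMeasure c D) ↔
      IntegrableOn (fun r => c * r ^ (D - 1) * F r) (Ioi 0) := by
  rw [← integrableOn_radialMeasure_iff hc measurableSet_Ioi subset_rfl, IntegrableOn,
    radialMeasure_restrict_Ioi_zero]

lemma radialMeasure_absolutelyContinuous : radialMeasure c D ≪ volume.restrict (Ioi 0) :=
  withDensity_absolutelyContinuous _ _

lemma restrict_Ioi_absolutelyContinuous_radialMeasure (hc : 0 < c) :
    volume.restrict (Ioi 0) ≪ radialMeasure c D := by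
  refine withDensity_absolutelyContinuous' (by fun_prop) ?_
  filter_upwards [ae_restrict_mem measurableSet_Ioi] with r (hr : 0 < r)
  simpa using by positivity

lemma ae_radialMeasure_iff (hc : 0 < c) {P : ℝ → Prop} :
    (∀ᵐ r ∂radialMeasure c D, P r) ↔ ∀ᵐ r ∂volume.restrict (Ioi 0), P r :=
  ⟨fun h => (restrict_Ioi_absolutelyContinuous_radialMeasure hc).ae_le h,
    fun h => radialMeasure_absolutelyContinuous.ae_le h⟩

lemma ae_radialMeasure_of_forall_pos {P : ℝ → Prop} (h : ∀ r, 0 < r → P r) :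
    ∀ᵐ r ∂radialMeasure c D, P r :=
  radialMeasure_absolutelyContinuous.ae_le (ae_restrict_of_forall_mem measurableSet_Ioi h)

lemma aemeasurable_radialMeasure_of_antitoneOn (hF : AntitoneOn F (Ioi 0)) :
    AEMeasurable F (radialMeasure c D) :=
  (aemeasurable_restrict_of_antitoneOn measurableSet_Ioi hF).mono_ac
    radialMeasure_absolutelyContinuous

lemma mul_rpow_comp_mul_left {μ r : ℝ} (hμ : 0 < μ) (hr : 0 < r) :
    c * r ^ (D - 1) * F (μ * r) = μ ^ (1 - D) * (c * (μ * r) ^ (D - 1) * F (μ * r)) := by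
  have hcancel : μ ^ (1 - D) * μ ^ (D - 1) = 1 := by
    rw [← Real.rpow_add hμ, sub_add_sub_cancel', sub_self, Real.rpow_zero]
  rw [Real.mul_rpow hμ.le hr.le]
  linear_combination (-(c * r ^ (D - 1) * F (μ * r))) * hcancel

lemma integral_radialMeasure_comp_mul_left (hc : 0 < c) {μ : ℝ} (hμ : 0 < μ) :
    ∫ r, F (μ * r) ∂radialMeasure c D = μ ^ (-D) * ∫ r, F r ∂radialMeasure c D := by
  rw [integral_radialMeasure hc, integral_radialMeasure hc,
    setIntegral_congr_fun measurableSet_Ioi fun r hr => mul_rpow_comp_mul_left hμ hr,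
    integral_const_mul, integral_comp_mul_left_Ioi (fun r => c * r ^ (D - 1) * F r) 0 hμ,
    mul_zero, smul_eq_mul, ← mul_assoc, ← Real.rpow_neg_one, ← Real.rpow_add hμ]
  ring_nf

lemma integrable_radialMeasure_comp_mul_left (hc : 0 < c) {μ : ℝ} (hμ : 0 < μ)
    (hF : Integrable F (radialMeasure c D)) :
    Integrable (fun r => F (μ * r)) (radialMeasure c D) := by
  rw [integrable_radialMeasure_iff hc] at hF ⊢
  have hscaled := (integrableOn_Ioi_comp_mul_left_iff (fun r => c * r ^ (D - 1) * F r) 0 hμ).2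
    (by simpa using hF)
  exact IntegrableOn.congr_fun (hscaled.const_mul (μ ^ (1 - D)))
    (fun r hr => (mul_rpow_comp_mul_left hμ hr).symm) measurableSet_Ioi

lemma integrableOn_Ioc_rpow_radialMeasure {t R : ℝ} (hc : 0 < c) (hR : 0 ≤ R) (ht : t < D) :
    IntegrableOn (fun r => r ^ (-t)) (Ioc 0 R) (radialMeasure c D) := by
  rw [integrableOn_radialMeasure_iff hc measurableSet_Ioc Ioc_subset_Ioi_self]
  have hpow : IntegrableOn (fun r : ℝ => r ^ (D - 1 - t)) (Ioc 0 R) :=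
    (intervalIntegrable_iff_integrableOn_Ioc_of_le hR).1
      (intervalIntegral.intervalIntegrable_rpow' (by linarith))
  refine IntegrableOn.congr_fun (hpow.const_mul c) (fun r hr => ?_) measurableSet_Ioc
  rw [mul_assoc, ← Real.rpow_add hr.1, sub_eq_add_neg (D - 1)]

lemma integrableOn_Ioi_rpow_radialMeasure {t R : ℝ} (hc : 0 < c) (hR : 0 < R) (ht : D < t) :
    IntegrableOn (fun r => r ^ (-t)) (Ioi R) (radialMeasure c D) := by
  rw [integrableOn_radialMeasure_iff hc measurableSet_Ioi (Ioi_subset_Ioi hR.le)]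
  have hpow : IntegrableOn (fun r : ℝ => r ^ (D - 1 - t)) (Ioi R) :=
    (integrableOn_Ioi_rpow_iff hR).2 (by linarith)
  refine IntegrableOn.congr_fun (hpow.const_mul c) (fun r hr => ?_) measurableSet_Ioi
  rw [mul_assoc, ← Real.rpow_add (hR.trans hr), sub_eq_add_neg (D - 1)]

lemma setIntegral_Ioc_rpow_radialMeasure {t R : ℝ} (hc : 0 < c) (hR : 0 ≤ R) (ht : t < D) :
    ∫ r in Ioc 0 R, r ^ (-t) ∂radialMeasure c D = c / (D - t) * R ^ (D - t) := by
  rw [setIntegral_radialMeasure hc measurableSet_Ioc Ioc_subset_Ioi_self]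
  have hcombine : ∀ r ∈ Ioc 0 R, c * r ^ (D - 1) * r ^ (-t) = c * r ^ (D - t - 1) := by
    intro r hr
    rw [mul_assoc, ← Real.rpow_add hr.1]
    ring_nf
  rw [setIntegral_congr_fun measurableSet_Ioc hcombine, integral_const_mul,
    ← intervalIntegral.integral_of_le hR, integral_rpow (Or.inl (by linarith)), sub_add_cancel,
    Real.zero_rpow (by linarith)]
  ring

lemma radialMeasure_Ioc_zero_lt_top {R : ℝ} (hc : 0 < c) (hD : 0 < D) (hR : 0 ≤ R) :
    radialMeasure c D (Ioc 0 R) < ⊤ := by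
  have h := integrableOn_Ioc_rpow_radialMeasure hc hR hD
  simpa [integrableOn_const_iff] using h

lemma radialMeasure_real_Ioc_zero {R : ℝ} (hc : 0 < c) (hD : 0 < D) (hR : 0 ≤ R) :
    (radialMeasure c D).real (Ioc 0 R) = c / D * R ^ D := by
  have h := setIntegral_Ioc_rpow_radialMeasure hc hR hD
  simpa using h

lemma restrict_Ioi_le_smul_radialMeasure (hc : 0 < c) (hD : 1 ≤ D) {r : ℝ} (hr : 0 < r) :
    volume.restrict (Ioi r) ≤
      ENNReal.ofReal (c * r ^ (D - 1))⁻¹ • radialMeasure c D := by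
  have hdensity : ∀ t ∈ Ioi r, (1 : ENNReal) ≤
      ENNReal.ofReal (c * r ^ (D - 1))⁻¹ * ENNReal.ofReal (c * t ^ (D - 1)) := by
    intro t (ht : r < t)
    rw [← ENNReal.ofReal_mul (by positivity), ENNReal.one_le_ofReal,
      inv_mul_eq_div, one_le_div (by positivity)]
    gcongr
  calc volume.restrict (Ioi r) = (volume.restrict (Ioi r)).withDensity 1 :=
        withDensity_one.symm
    _ ≤ (volume.restrict (Ioi r)).withDensity
          (ENNReal.ofReal (c * r ^ (D - 1))⁻¹ • fun t => ENNReal.ofReal (c * t ^ (D - 1))) :=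
        withDensity_mono (ae_restrict_of_forall_mem measurableSet_Ioi hdensity)
    _ = ENNReal.ofReal (c * r ^ (D - 1))⁻¹ • (radialMeasure c D).restrict (Ioi r) := by
        rw [withDensity_smul _ (by fun_prop),
          radialMeasure_restrict_of_subset measurableSet_Ioi (Ioi_subset_Ioi hr.le)]
    _ ≤ ENNReal.ofReal (c * r ^ (D - 1))⁻¹ • radialMeasure c D := by
        gcongr
        exact Measure.restrict_le_self

lemma integrableOn_Ioi_of_integrable_radialMeasure (hc : 0 < c) (hD : 1 ≤ D) {r : ℝ}
    (hr : 0 < r) (hF : Integrable F (radialMeasure c D)) : IntegrableOn F (Ioi r) :=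
  (hF.smul_measure ENNReal.ofReal_ne_top).mono_measure
    (restrict_Ioi_le_smul_radialMeasure hc hD hr)

lemma setIntegral_Ioi_le_integral_radialMeasure_div (hc : 0 < c) (hD : 1 ≤ D) {r : ℝ}
    (hr : 0 < r) (hF0 : ∀ t, 0 ≤ F t) (hF : Integrable F (radialMeasure c D)) :
    ∫ t in Ioi r, F t ≤ (∫ t, F t ∂radialMeasure c D) / (c * r ^ (D - 1)) := by
  have h := integral_mono_measure (restrict_Ioi_le_smul_radialMeasure hc hD hr)
    (Eventually.of_forall hF0) (hF.smul_measure ENNReal.ofReal_ne_top)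
  rwa [integral_smul_measure, ENNReal.toReal_ofReal (by positivity), smul_eq_mul,
    inv_mul_eq_div] at h

end RadialMeasure

/-! ### Radial profiles -/

/-- `∫₀^∞ f(r)^n c r^(D-1) dr`, the radial form of `∫ |u|^n` for `u x = f ‖x‖`. -/
noncomputable def powerIntegral (c D : ℝ) (f : ℝ → ℝ) (n : ℝ) : ℝ :=
  ∫ r, f r ^ n ∂radialMeasure c D

/-- Competitors of the one-dimensional problem: nonnegative locally absolutely continuous functions
`f` on `(0, ∞)` with derivative `-g`, where `g ≥ 0`, such that the three integrals in the quotient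
are finite. Nothing is required at the origin, so that the class is closed under limits. -/
structure RadialProfile (c D p q m : ℝ) (f g : ℝ → ℝ) : Prop where
  nonneg : ∀ r, 0 < r → 0 ≤ f r
  slope_nonneg : ∀ r, 0 ≤ g r
  slope_measurable : Measurable g
  slope_integrableOn : ∀ r s, 0 < r → r ≤ s → IntegrableOn g (Ioc r s)
  sub_eq_setIntegral : ∀ r s, 0 < r → r ≤ s → f r - f s = ∫ t in Ioc r s, g t
  integrable_rpow_q : Integrable (fun r => f r ^ (q + 1)) (radialMeasure c D)
  integrable_rpow_m : Integrable (fun r => f r ^ (m + 1)) (radialMeasure c D)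
  integrable_slope_rpow : Integrable (fun r => g r ^ p) (radialMeasure c D)

section PowerIntegral

variable {c D n : ℝ} {f : ℝ → ℝ}

lemma powerIntegral_nonneg (hf : ∀ r, 0 < r → 0 ≤ f r) : 0 ≤ powerIntegral c D f n :=
  integral_nonneg_of_ae (ae_radialMeasure_of_forall_pos fun r hr => Real.rpow_nonneg (hf r hr) _)

lemma powerIntegral_scale (hc : 0 < c) (hf : ∀ r, 0 < r → 0 ≤ f r) {l u : ℝ} (hl : 0 < l)
    (hu : 0 < u) :
    powerIntegral c D (fun r => l * f (u * r)) n = l ^ n * u ^ (-D) * powerIntegral c D f n := by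
  rw [powerIntegral, powerIntegral, mul_assoc,
    ← integral_radialMeasure_comp_mul_left (F := fun r => f r ^ n) hc hu, ← integral_const_mul]
  exact integral_congr_ae (ae_radialMeasure_of_forall_pos fun r hr =>
    Real.mul_rpow hl.le (hf _ (by positivity)))

lemma integrable_rpow_scale (hc : 0 < c) (hf : ∀ r, 0 < r → 0 ≤ f r) {l u : ℝ} (hl : 0 < l)
    (hu : 0 < u) (hi : Integrable (fun r => f r ^ n) (radialMeasure c D)) :
    Integrable (fun r => (l * f (u * r)) ^ n) (radialMeasure c D) :=
  ((integrable_radialMeasure_comp_mul_left hc hu hi).const_mul (l ^ n)).congr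
    (ae_radialMeasure_of_forall_pos fun r hr =>
      (Real.mul_rpow hl.le (hf _ (by positivity))).symm)

variable {p : ℝ} {G : ℝ → ℝ}

lemma integrableOn_Ioc_of_integrable_rpow (hc : 0 < c) (hD : 1 ≤ D) (hp : 1 ≤ p)
    (hG : ∀ r, 0 ≤ G r) (hGm : Measurable G)
    (hGi : Integrable (fun r => G r ^ p) (radialMeasure c D)) {r s : ℝ} (hr : 0 < r) :
    IntegrableOn G (Ioc r s) :=
  integrable_of_integrable_rpow hp (Eventually.of_forall hG) hGm.aemeasurable
    ((integrableOn_Ioi_of_integrable_radialMeasure hc hD hr hGi).mono_set Ioc_subset_Ioi_self)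

lemma setIntegral_Ioc_le_powerIntegral (hc : 0 < c) (hD : 1 ≤ D) (hp : 1 < p)
    (hG : ∀ r, 0 ≤ G r) (hGm : Measurable G)
    (hGi : Integrable (fun r => G r ^ p) (radialMeasure c D)) {r s : ℝ} (hr : 0 < r)
    (hrs : r ≤ s) :
    ∫ t in Ioc r s, G t ≤
      (s - r) ^ (1 - 1 / p) * (powerIntegral c D G p / (c * r ^ (D - 1))) ^ (1 / p) := by
  have hGp : ∀ t, 0 ≤ G t ^ p := fun t => Real.rpow_nonneg (hG t) p
  have hloc := integrableOn_Ioi_of_integrable_radialMeasure hc hD hr hGi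
  have henergy : ∫ t in Ioc r s, G t ^ p ≤ powerIntegral c D G p / (c * r ^ (D - 1)) :=
    (setIntegral_mono_set hloc (Eventually.of_forall hGp)
      Ioc_subset_Ioi_self.eventuallyLE).trans
      (setIntegral_Ioi_le_integral_radialMeasure_div hc hD hr hGp hGi)
  have hhoelder := integral_le_measureReal_rpow_mul (μ := volume.restrict (Ioc r s)) hp
    (Eventually.of_forall hG) hGm.aemeasurable (hloc.mono_set Ioc_subset_Ioi_self)
  rw [measureReal_restrict_apply_univ, Real.volume_real_Ioc_of_le hrs] at hhoelder
  refine hhoelder.trans ?_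
  have : 0 ≤ s - r := sub_nonneg.2 hrs
  gcongr
  exact integral_nonneg hGp

end PowerIntegral

lemma integrableOn_Ioc_rpow_neg_one_sub {α r : ℝ} (hr : 0 < r) :
    IntegrableOn (fun t : ℝ => t ^ (-1 - α)) (Ioc r 1) :=
  (ContinuousOn.integrableOn_Icc fun _ ht =>
    (Real.continuousAt_rpow_const _ _ (Or.inl (hr.trans_le ht.1).ne')).continuousWithinAt).mono_set
      Ioc_subset_Icc_self

lemma setIntegral_Ioc_rpow_neg_one_sub_le {α r : ℝ} (hα : 0 < α) (hr : 0 < r) (hr1 : r ≤ 1) :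
    ∫ t in Ioc r 1, t ^ (-1 - α) ≤ α⁻¹ * r ^ (-α) := by
  have hzero : (0 : ℝ) ∉ uIcc r 1 := by
    rw [uIcc_of_le hr1]
    exact fun h => hr.not_ge h.1
  rw [← intervalIntegral.integral_of_le hr1, integral_rpow (Or.inr ⟨by linarith, hzero⟩),
    show -1 - α + 1 = -α by ring, Real.one_rpow, div_neg, ← neg_div, neg_sub, inv_mul_eq_div]
  gcongr
  linarith

/-- `f` is `O(r ^ (-α))` at the origin, with the bound on all of `(0, 1]`. -/
def OriginGrowthLE (f : ℝ → ℝ) (α : ℝ) : Prop :=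
  ∃ C, ∀ r, 0 < r → r ≤ 1 → f r ≤ C * r ^ (-α)

namespace RadialProfile

variable {c D p q m : ℝ} {f g : ℝ → ℝ} (h : RadialProfile c D p q m f g)

include h

lemma antitoneOn : AntitoneOn f (Ioi 0) := by
  intro r hr s _ hrs
  rw [← sub_nonneg, h.sub_eq_setIntegral r s hr hrs]
  exact integral_nonneg h.slope_nonneg

lemma ae_nonneg : 0 ≤ᵐ[radialMeasure c D] f := ae_radialMeasure_of_forall_pos h.nonneg

lemma ae_slope_nonneg : 0 ≤ᵐ[radialMeasure c D] g := Eventually.of_forall h.slope_nonneg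

lemma aemeasurable : AEMeasurable f (radialMeasure c D) :=
  aemeasurable_radialMeasure_of_antitoneOn h.antitoneOn

lemma powerIntegral_slope_nonneg : 0 ≤ powerIntegral c D g p :=
  powerIntegral_nonneg fun r _ => h.slope_nonneg r

lemma rpow_mul_le_powerIntegral (hc : 0 < c) (hD : 0 < D) (hq : 0 ≤ q) {r : ℝ} (hr : 0 < r) :
    f r ^ (q + 1) * (c / D * r ^ D) ≤ powerIntegral c D f (q + 1) := by
  have hfinite := radialMeasure_Ioc_zero_lt_top hc hD hr.le
  calc f r ^ (q + 1) * (c / D * r ^ D) = ∫ _ in Ioc 0 r, f r ^ (q + 1) ∂radialMeasure c D := by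
        rw [setIntegral_const, radialMeasure_real_Ioc_zero hc hD hr.le, smul_eq_mul, mul_comm]
    _ ≤ ∫ t in Ioc 0 r, f t ^ (q + 1) ∂radialMeasure c D := by
        refine setIntegral_mono_on (integrableOn_const hfinite.ne)
          h.integrable_rpow_q.integrableOn measurableSet_Ioc fun t ht => ?_
        exact Real.rpow_le_rpow (h.nonneg r hr) (h.antitoneOn ht.1 hr ht.2) (by linarith)
    _ ≤ powerIntegral c D f (q + 1) :=
        setIntegral_le_integral h.integrable_rpow_q
          (ae_radialMeasure_of_forall_pos fun t ht => Real.rpow_nonneg (h.nonneg t ht) _)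

lemma le_mul_rpow (hc : 0 < c) (hD : 0 < D) (hq : 0 ≤ q) {r : ℝ} (hr : 0 < r) :
    f r ≤ (D / c * powerIntegral c D f (q + 1)) ^ (1 / (q + 1)) * r ^ (-(D / (q + 1))) := by
  have hQ : 0 ≤ powerIntegral c D f (q + 1) := powerIntegral_nonneg h.nonneg
  have hpow : f r ^ (q + 1) ≤ D / c * powerIntegral c D f (q + 1) * r ^ (-D) := by
    have hchebyshev := h.rpow_mul_le_powerIntegral hc hD hq hr
    rw [← le_div_iff₀ (by positivity)] at hchebyshev
    refine hchebyshev.trans_eq ?_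
    rw [Real.rpow_neg hr.le]
    field_simp
  have hroot := Real.rpow_le_rpow (Real.rpow_nonneg (h.nonneg r hr) _) hpow
    (show 0 ≤ 1 / (q + 1) by positivity)
  rw [← Real.rpow_mul (h.nonneg r hr), mul_one_div_cancel (by linarith), Real.rpow_one,
    Real.mul_rpow (by positivity) (by positivity), ← Real.rpow_mul hr.le] at hroot
  rwa [show -(D / (q + 1)) = -D * (1 / (q + 1)) by ring]

lemma tendsto_atTop_zero (hc : 0 < c) (hD : 0 < D) (hq : 0 ≤ q) : Tendsto f atTop (𝓝 0) := by
  have hdecay := (tendsto_rpow_neg_atTop (show 0 < D / (q + 1) by positivity)).const_mul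
    ((D / c * powerIntegral c D f (q + 1)) ^ (1 / (q + 1)))
  rw [mul_zero] at hdecay
  refine squeeze_zero' ?_ ?_ hdecay
  · filter_upwards [eventually_gt_atTop 0] using h.nonneg
  · filter_upwards [eventually_gt_atTop 0] with r hr using h.le_mul_rpow hc hD hq hr

lemma powerIntegral_slope_pos (hc : 0 < c) (hD : 0 < D) (hp : p ≠ 0) (hq : 0 ≤ q) (hm : m + 1 ≠ 0)
    (hM : 0 < powerIntegral c D f (m + 1)) : 0 < powerIntegral c D g p := by
  refine h.powerIntegral_slope_nonneg.lt_of_ne' fun hzero => hM.ne' ?_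
  have hslope : ∀ᵐ r ∂volume.restrict (Ioi 0), g r = 0 := by
    rw [powerIntegral, integral_eq_zero_iff_of_nonneg (fun r => Real.rpow_nonneg
      (h.slope_nonneg r) p) h.integrable_slope_rpow, EventuallyEq, ae_radialMeasure_iff hc] at hzero
    filter_upwards [hzero] with r hr
    simpa [Real.rpow_eq_zero (h.slope_nonneg r) hp] using hr
  have hconst : ∀ r s, 0 < r → r ≤ s → f r = f s := by
    intro r s hr hrs
    rw [← sub_eq_zero, h.sub_eq_setIntegral r s hr hrs]
    exact integral_eq_zero_of_ae
      (ae_restrict_of_ae_restrict_of_subset (fun t ht => hr.trans ht.1) hslope)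
  have hf : ∀ r, 0 < r → f r = 0 := fun r hr =>
    tendsto_nhds_unique (tendsto_const_nhds.congr' (by
      filter_upwards [eventually_ge_atTop r] with s hs using hconst r s hr hs))
      (h.tendsto_atTop_zero hc hD hq)
  refine integral_eq_zero_of_ae (ae_radialMeasure_of_forall_pos fun r hr => ?_)
  simp [hf r hr, Real.zero_rpow hm]

lemma le_of_slope_le {α K r : ℝ} {k : ℝ → ℝ} (hα : 0 < α) (hK : 0 ≤ K) (hr : 0 < r)
    (hr1 : r ≤ 1) (hk : IntegrableOn k (Ioc r 1))
    (hg : ∀ t ∈ Ioc r 1, g t ≤ K * t ^ (-1 - α) + k t) :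
    f r ≤ f 1 + K * (α⁻¹ * r ^ (-α)) + ∫ t in Ioc r 1, k t := by
  have hpow := (integrableOn_Ioc_rpow_neg_one_sub (α := α) hr).const_mul K
  have hbound : ∫ t in Ioc r 1, g t ≤ ∫ t in Ioc r 1, (K * t ^ (-1 - α) + k t) :=
    setIntegral_mono_on (h.slope_integrableOn r 1 hr hr1) (hpow.add hk) measurableSet_Ioc hg
  rw [integral_add hpow hk, integral_const_mul, ← h.sub_eq_setIntegral r 1 hr hr1] at hbound
  have := mul_le_mul_of_nonneg_left (setIntegral_Ioc_rpow_neg_one_sub_le hα hr hr1) hK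
  linarith

lemma originGrowthLE_of_slope {α : ℝ} (hα : 0 < α) (hg : OriginGrowthLE g (1 + α)) :
    OriginGrowthLE f α := by
  obtain ⟨K, hK⟩ := hg
  refine ⟨f 1 + |K| / α, fun r hr hr1 => ?_⟩
  have hbound := h.le_of_slope_le hα (abs_nonneg K) hr hr1 integrableOn_zero (by
    intro t ht
    have ht0 : 0 < t := hr.trans ht.1
    rw [add_zero, ← neg_add']
    refine (hK t ht0 ht.2).trans ?_
    gcongr
    exact le_abs_self K)
  have hone : 1 ≤ r ^ (-α) :=
    Real.one_le_rpow_of_pos_of_le_one_of_nonpos hr hr1 (by linarith)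
  have hf1 : f 1 ≤ f 1 * r ^ (-α) := le_mul_of_one_le_right (h.nonneg 1 one_pos) hone
  simp only [integral_zero, add_zero] at hbound
  calc f r ≤ f 1 + |K| * (α⁻¹ * r ^ (-α)) := hbound
    _ ≤ f 1 * r ^ (-α) + |K| * (α⁻¹ * r ^ (-α)) := by gcongr
    _ = (f 1 + |K| / α) * r ^ (-α) := by ring

lemma slope_le_of_mem_Ioc (hp : 1 ≤ p) {α r t : ℝ} (hα : 0 ≤ α)
    (hDα : D ≤ (1 + α) * p) (hr : 0 < r) (ht : t ∈ Ioc r 1) :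
    g t ≤ t ^ (-1 - α) + r ^ (-α) * (t ^ (D - 1) * g t ^ p) := by
  have ht0 : 0 < t := hr.trans ht.1
  have hsplit := le_add_rpow_mul_rpow (h.slope_nonneg t) (Real.rpow_pos_of_pos ht0 (-1 - α)) hp
  have hweight : (t ^ (-1 - α)) ^ (1 - p) ≤ r ^ (-α) * t ^ (D - 1) := by
    calc (t ^ (-1 - α)) ^ (1 - p) = t ^ ((-1 - α) * (1 - p)) := (Real.rpow_mul ht0.le _ _).symm
      _ ≤ t ^ (-α + (D - 1)) := Real.rpow_le_rpow_of_exponent_ge ht0 ht.2 (by nlinarith)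
      _ = t ^ (-α) * t ^ (D - 1) := Real.rpow_add ht0 _ _
      _ ≤ r ^ (-α) * t ^ (D - 1) := mul_le_mul_of_nonneg_right
          (Real.rpow_le_rpow_of_nonpos hr ht.1.le (neg_nonpos.2 hα)) (by positivity)
  have hgp := Real.rpow_nonneg (h.slope_nonneg t) p
  calc g t ≤ t ^ (-1 - α) + (t ^ (-1 - α)) ^ (1 - p) * g t ^ p := hsplit
    _ ≤ t ^ (-1 - α) + r ^ (-α) * t ^ (D - 1) * g t ^ p := by gcongr
    _ = _ := by ring

lemma le_mul_rpow_neg (hc : 0 < c) (hp : 1 ≤ p) {α r : ℝ} (hα : 0 < α)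
    (hDα : D ≤ (1 + α) * p) (hr : 0 < r) (hr1 : r ≤ 1) :
    f r ≤ (f 1 + α⁻¹ + powerIntegral c D g p / c) * r ^ (-α) := by
  have hsub : Ioc r 1 ⊆ Ioi 0 := fun t ht => hr.trans ht.1
  have henergy : ∫ t in Ioc r 1, t ^ (D - 1) * g t ^ p ≤ powerIntegral c D g p / c := by
    rw [le_div_iff₀' hc, ← integral_const_mul]
    simp only [← mul_assoc]
    rw [← setIntegral_radialMeasure hc measurableSet_Ioc hsub]
    exact setIntegral_le_integral h.integrable_slope_rpow
      (Eventually.of_forall fun t => Real.rpow_nonneg (h.slope_nonneg t) p)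
  have hint : IntegrableOn (fun t => t ^ (D - 1) * g t ^ p) (Ioc r 1) := by
    have := (integrableOn_radialMeasure_iff hc measurableSet_Ioc hsub).1
      h.integrable_slope_rpow.integrableOn
    exact (this.const_mul c⁻¹).congr (Eventually.of_forall fun t => by field_simp)
  have hbound := h.le_of_slope_le hα zero_le_one hr hr1 (hint.const_mul (r ^ (-α)))
    fun t ht => by simpa using h.slope_le_of_mem_Ioc hp hα.le hDα hr ht
  have hone : 1 ≤ r ^ (-α) :=
    Real.one_le_rpow_of_pos_of_le_one_of_nonpos hr hr1 (by linarith)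
  have hf1 : f 1 ≤ f 1 * r ^ (-α) := le_mul_of_one_le_right (h.nonneg 1 one_pos) hone
  rw [integral_const_mul] at hbound
  calc f r
    _ ≤ f 1 + 1 * (α⁻¹ * r ^ (-α)) + r ^ (-α) * ∫ t in Ioc r 1, t ^ (D - 1) * g t ^ p := hbound
    _ ≤ f 1 * r ^ (-α) + 1 * (α⁻¹ * r ^ (-α)) + r ^ (-α) * (powerIntegral c D g p / c) := by
        gcongr
    _ = _ := by ring

lemma convexCombination {f₁ g₁ : ℝ → ℝ} (h₁ : RadialProfile c D p q m f₁ g₁) (hp : 1 ≤ p)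
    (hq : 0 ≤ q) (hm : 0 ≤ m) {t : ℝ} (ht : 0 ≤ t) (ht1 : t ≤ 1) :
    RadialProfile c D p q m (fun r => (1 - t) * f r + t * f₁ r)
      (fun r => (1 - t) * g r + t * g₁ r) where
  nonneg r hr := add_nonneg (mul_nonneg (sub_nonneg.2 ht1) (h.nonneg r hr))
    (mul_nonneg ht (h₁.nonneg r hr))
  slope_nonneg r := add_nonneg (mul_nonneg (sub_nonneg.2 ht1) (h.slope_nonneg r))
    (mul_nonneg ht (h₁.slope_nonneg r))
  slope_measurable := (h.slope_measurable.const_mul _).add (h₁.slope_measurable.const_mul _)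
  slope_integrableOn r s hr hrs := ((h.slope_integrableOn r s hr hrs).const_mul _).add
    ((h₁.slope_integrableOn r s hr hrs).const_mul _)
  sub_eq_setIntegral r s hr hrs := by
    rw [integral_add ((h.slope_integrableOn r s hr hrs).const_mul _)
      ((h₁.slope_integrableOn r s hr hrs).const_mul _), integral_const_mul, integral_const_mul,
      ← h.sub_eq_setIntegral r s hr hrs, ← h₁.sub_eq_setIntegral r s hr hrs]
    ring
  integrable_rpow_q := integrable_rpow_convexCombination (by linarith) h.ae_nonneg h₁.ae_nonneg
    h.aemeasurable h₁.aemeasurable h.integrable_rpow_q h₁.integrable_rpow_q ht ht1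
  integrable_rpow_m := integrable_rpow_convexCombination (by linarith) h.ae_nonneg h₁.ae_nonneg
    h.aemeasurable h₁.aemeasurable h.integrable_rpow_m h₁.integrable_rpow_m ht ht1
  integrable_slope_rpow := integrable_rpow_convexCombination hp h.ae_slope_nonneg
    h₁.ae_slope_nonneg h.slope_measurable.aemeasurable h₁.slope_measurable.aemeasurable
    h.integrable_slope_rpow h₁.integrable_slope_rpow ht ht1

lemma midpoint {f₁ g₁ : ℝ → ℝ} (h₁ : RadialProfile c D p q m f₁ g₁) (hp : 1 ≤ p)
    (hq : 0 ≤ q) (hm : 0 ≤ m) :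
    RadialProfile c D p q m (fun r => (f r + f₁ r) / 2) (fun r => (g r + g₁ r) / 2) := by
  convert h.convexCombination h₁ hp hq hm one_half_pos.le one_half_lt_one.le using 2 <;> ring

lemma scale (hc : 0 < c) {l u : ℝ} (hl : 0 < l) (hu : 0 < u) :
    RadialProfile c D p q m (fun r => l * f (u * r)) (fun r => l * u * g (u * r)) where
  nonneg r hr := mul_nonneg hl.le (h.nonneg _ (by positivity))
  slope_nonneg r := mul_nonneg (by positivity) (h.slope_nonneg _)
  slope_measurable := (h.slope_measurable.comp (measurable_const_mul u)).const_mul _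
  slope_integrableOn r s hr hrs := by
    have hur : u * r ≤ u * s := by gcongr
    have hint := ((intervalIntegrable_iff_integrableOn_Ioc_of_le hur).2
      (h.slope_integrableOn _ _ (by positivity) hur)).comp_mul_left (c := u)
    rw [mul_div_cancel_left₀ _ hu.ne', mul_div_cancel_left₀ _ hu.ne',
      intervalIntegrable_iff_integrableOn_Ioc_of_le hrs] at hint
    exact hint.const_mul _
  sub_eq_setIntegral r s hr hrs := by
    have hur : u * r ≤ u * s := by gcongr
    rw [integral_const_mul, ← intervalIntegral.integral_of_le hrs,
      intervalIntegral.integral_comp_mul_left _ hu.ne', ← mul_sub,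
      h.sub_eq_setIntegral _ _ (by positivity) hur, ← intervalIntegral.integral_of_le hur,
      smul_eq_mul]
    field_simp
  integrable_rpow_q := integrable_rpow_scale hc h.nonneg hl hu h.integrable_rpow_q
  integrable_rpow_m := integrable_rpow_scale hc h.nonneg hl hu h.integrable_rpow_m
  integrable_slope_rpow := integrable_rpow_scale hc (fun r _ => h.slope_nonneg r)
    (mul_pos hl hu) hu h.integrable_slope_rpow

end RadialProfile

/-! ### Normalized minimizing sequences -/

/-- The parameters of the one-dimensional problem: minimize
`(∫ f^(q+1))^a * (∫ |f'|^p) / (∫ f^(m+1))^b` against `radialMeasure c D`. The two balance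
identities say that the quotient is invariant under `f ↦ l f` and under `f ↦ f (u ·)`. -/
structure QuotientParameters (c D p q m a b : ℝ) : Prop where
  c_pos : 0 < c
  one_le_D : 1 ≤ D
  one_lt_p : 1 < p
  q_nonneg : 0 ≤ q
  q_lt_m : q < m
  a_pos : 0 < a
  b_pos : 0 < b
  amplitude_balance : a * (q + 1) + p = b * (m + 1)
  dilation_balance : D * b + p = D * a + D

/-- `β` is a lower bound for the quotient, written without division so that profiles with
`∫ f^(m+1) = 0` need no separate treatment. -/
def IsQuotientLowerBound (c D p q m a b β : ℝ) : Prop :=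
  ∀ f g, RadialProfile c D p q m f g →
    β * powerIntegral c D f (m + 1) ^ b ≤ powerIntegral c D f (q + 1) ^ a * powerIntegral c D g p

/-- A minimizer of the quotient with both power integrals normalized to one. -/
structure IsNormalizedMinimizer (c D p q m a b : ℝ) (f g : ℝ → ℝ) : Prop where
  profile : RadialProfile c D p q m f g
  powerIntegral_q : powerIntegral c D f (q + 1) = 1
  powerIntegral_m : powerIntegral c D f (m + 1) = 1
  isQuotientLowerBound : IsQuotientLowerBound c D p q m a b (powerIntegral c D g p)

/-- A normalized sequence of profiles whose gradient energies converge to a lower bound `β` of the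
quotient. -/
structure MinimizingSequence (c D p q m a b β : ℝ) (f g : ℕ → ℝ → ℝ) : Prop where
  profile : ∀ k, RadialProfile c D p q m (f k) (g k)
  powerIntegral_q : ∀ k, powerIntegral c D (f k) (q + 1) = 1
  powerIntegral_m : ∀ k, powerIntegral c D (f k) (m + 1) = 1
  tendsto_energy : Tendsto (fun k => powerIntegral c D (g k) p) atTop (𝓝 β)
  isQuotientLowerBound : IsQuotientLowerBound c D p q m a b β

lemma exists_normalizing_scales {D q m Q M : ℝ} (hD : 0 < D) (hqm : q < m) (hQ : 0 < Q)
    (hM : 0 < M) :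
    ∃ l u : ℝ, 0 < l ∧ 0 < u ∧ l ^ (q + 1) * u ^ (-D) * Q = 1 ∧ l ^ (m + 1) * u ^ (-D) * M = 1 := by
  set l : ℝ := (Q / M) ^ (m - q)⁻¹
  have hl : 0 < l := by positivity
  set u : ℝ := (l ^ (q + 1) * Q) ^ D⁻¹
  have hu : u ^ (-D) = (l ^ (q + 1) * Q)⁻¹ := by
    rw [Real.rpow_neg (by positivity), Real.rpow_inv_rpow (by positivity) hD.ne']
  have hlQM : l ^ (m + 1) * M = l ^ (q + 1) * Q := by
    rw [show m + 1 = q + 1 + (m - q) by ring, Real.rpow_add hl,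
      Real.rpow_inv_rpow (by positivity) (sub_pos.2 hqm).ne']
    field_simp
  have hpos : 0 < l ^ (q + 1) * Q := by positivity
  refine ⟨l, u, hl, by positivity, ?_, ?_⟩
  · rw [hu, mul_right_comm, mul_inv_cancel₀ hpos.ne']
  · rw [hu, mul_right_comm, hlQM, mul_inv_cancel₀ hpos.ne']

lemma rpow_eq_of_mul_rpow_neg_mul_eq_one {D n l u I : ℝ} (e : ℝ) (hl : 0 < l) (hu : 0 < u)
    (hI : l ^ n * u ^ (-D) * I = 1) : I ^ e = l ^ (-(n * e)) * u ^ (D * e) := by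
  have hI' : I = l ^ (-n) * u ^ D := by
    rw [Real.rpow_neg hu.le] at hI
    rw [Real.rpow_neg hl.le]
    field_simp at hI ⊢
    linarith
  rw [hI', Real.mul_rpow (by positivity) (by positivity), ← Real.rpow_mul hl.le,
    ← Real.rpow_mul hu.le, neg_mul]

namespace QuotientParameters

variable {c D p q m a b : ℝ} (P : QuotientParameters c D p q m a b)

include P

lemma D_pos : 0 < D := zero_lt_one.trans_le P.one_le_D

lemma m_nonneg : 0 ≤ m := P.q_nonneg.trans P.q_lt_m.le

lemma energy_factor_of_normalized {l u Q M : ℝ} (hl : 0 < l) (hu : 0 < u) (hM : 0 < M)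
    (hQ1 : l ^ (q + 1) * u ^ (-D) * Q = 1) (hM1 : l ^ (m + 1) * u ^ (-D) * M = 1) :
    (l * u) ^ p * u ^ (-D) = Q ^ a / M ^ b := by
  rw [eq_div_iff (by positivity), rpow_eq_of_mul_rpow_neg_mul_eq_one a hl hu hQ1,
    rpow_eq_of_mul_rpow_neg_mul_eq_one b hl hu hM1, Real.mul_rpow hl.le hu.le]
  calc l ^ p * u ^ p * u ^ (-D) * (l ^ (-((m + 1) * b)) * u ^ (D * b))
      = (l ^ p * l ^ (-((m + 1) * b))) * (u ^ p * u ^ (-D) * u ^ (D * b)) := by ring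
    _ = l ^ (-((q + 1) * a)) * u ^ (D * a) := by
        rw [← Real.rpow_add hl, ← Real.rpow_add hu, ← Real.rpow_add hu]
        congr 2
        · linarith [P.amplitude_balance]
        · linarith [P.dilation_balance]

lemma exists_normalized {f g : ℝ → ℝ} (h : RadialProfile c D p q m f g)
    (hM : 0 < powerIntegral c D f (m + 1)) :
    ∃ f₁ g₁, RadialProfile c D p q m f₁ g₁ ∧ powerIntegral c D f₁ (q + 1) = 1 ∧
      powerIntegral c D f₁ (m + 1) = 1 ∧
      powerIntegral c D g₁ p = powerIntegral c D f (q + 1) ^ a * powerIntegral c D g p /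
        powerIntegral c D f (m + 1) ^ b := by
  have hQ : 0 < powerIntegral c D f (q + 1) := integral_rpow_pos_of_integral_rpow_pos
    (by linarith [P.q_nonneg]) (by linarith [P.m_nonneg]) h.ae_nonneg h.integrable_rpow_q hM
  obtain ⟨l, u, hl, hu, hQ1, hM1⟩ := exists_normalizing_scales P.D_pos P.q_lt_m hQ hM
  refine ⟨_, _, h.scale P.c_pos hl hu, ?_, ?_, ?_⟩
  · rw [powerIntegral_scale P.c_pos h.nonneg hl hu, hQ1]
  · rw [powerIntegral_scale P.c_pos h.nonneg hl hu, hM1]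
  · rw [powerIntegral_scale P.c_pos (fun r _ => h.slope_nonneg r) (mul_pos hl hu) hu,
      P.energy_factor_of_normalized hl hu hM hQ1 hM1, div_mul_eq_mul_div]

end QuotientParameters

section TentProfile

variable {c D p q m : ℝ}

lemma integrable_tent_rpow (hc : 0 < c) (hD : 0 < D) {n : ℝ} (hn : 0 < n) :
    Integrable (fun r => max (1 - r) 0 ^ n) (radialMeasure c D) := by
  have hone : Integrable ((Ioc 0 1).indicator fun _ => (1 : ℝ)) (radialMeasure c D) :=
    (integrableOn_const (radialMeasure_Ioc_zero_lt_top hc hD zero_le_one).ne).integrable_indicator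
      measurableSet_Ioc
  refine hone.mono' (Measurable.aestronglyMeasurable (by fun_prop))
    (ae_radialMeasure_of_forall_pos fun r hr => ?_)
  rw [Real.norm_of_nonneg (by positivity)]
  rcases le_or_gt r 1 with hr1 | hr1
  · rw [indicator_of_mem (show r ∈ Ioc (0 : ℝ) 1 from ⟨hr, hr1⟩)]
    exact Real.rpow_le_one (by positivity) (max_le (by linarith) zero_le_one) hn.le
  · rw [max_eq_right (by linarith), Real.zero_rpow hn.ne']
    exact indicator_nonneg (fun _ _ => zero_le_one) r

lemma radialProfile_tent (hc : 0 < c) (hD : 0 < D) (hp : p ≠ 0) (hq : 0 ≤ q) (hm : 0 ≤ m) :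
    RadialProfile c D p q m (fun r => max (1 - r) 0) ((Ioc 0 1).indicator 1) where
  nonneg _ _ := le_max_right _ _
  slope_nonneg := indicator_nonneg fun _ _ => zero_le_one
  slope_measurable := measurable_const.indicator measurableSet_Ioc
  slope_integrableOn r s _ _ := by
    refine IntegrableOn.indicator ?_ measurableSet_Ioc
    exact integrableOn_const (by simp)
  sub_eq_setIntegral r s hr hrs := by
    rw [setIntegral_indicator measurableSet_Ioc, Ioc_inter_Ioc, max_eq_left hr.le]
    simp only [Pi.one_apply, integral_const, smul_eq_mul, mul_one, MeasurableSet.univ,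
      measureReal_restrict_apply, univ_inter, Real.volume_real_Ioc]
    grind
  integrable_rpow_q := integrable_tent_rpow hc hD (by linarith)
  integrable_rpow_m := integrable_tent_rpow hc hD (by linarith)
  integrable_slope_rpow := by
    refine ((integrableOn_const (C := (1 : ℝ))
      (radialMeasure_Ioc_zero_lt_top hc hD zero_le_one).ne).integrable_indicator
      measurableSet_Ioc).congr (Eventually.of_forall fun r => ?_)
    by_cases hr : r ∈ Ioc (0 : ℝ) 1 <;> simp [hr, Real.zero_rpow hp]

lemma powerIntegral_tent_pos (hc : 0 < c) (hD : 0 < D) (hm : 0 ≤ m) :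
    0 < powerIntegral c D (fun r => max (1 - r) 0) (m + 1) := by
  have htent := radialProfile_tent hc hD one_ne_zero hm hm
  refine lt_of_lt_of_le ?_ (htent.rpow_mul_le_powerIntegral hc hD hm (r := 1 / 2) one_half_pos)
  have : (0 : ℝ) < max (1 - 1 / 2) 0 := by norm_num
  positivity

end TentProfile

namespace QuotientParameters

variable {c D p q m a b : ℝ}

lemma exists_minimizingSequence (P : QuotientParameters c D p q m a b) :
    ∃ β f g, MinimizingSequence c D p q m a b β f g := by
  set S : Set ℝ := {x | ∃ f g, RadialProfile c D p q m f g ∧ powerIntegral c D f (q + 1) = 1 ∧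
    powerIntegral c D f (m + 1) = 1 ∧ powerIntegral c D g p = x}
  have hne : S.Nonempty := by
    obtain ⟨f, g, h, hQ, hM, -⟩ := P.exists_normalized
      (radialProfile_tent P.c_pos P.D_pos (by linarith [P.one_lt_p]) P.q_nonneg P.m_nonneg)
      (powerIntegral_tent_pos P.c_pos P.D_pos P.m_nonneg)
    exact ⟨_, f, g, h, hQ, hM, rfl⟩
  have hbdd : BddBelow S := ⟨0, by
    rintro x ⟨f, g, h, -, -, rfl⟩
    exact h.powerIntegral_slope_nonneg⟩
  obtain ⟨x, -, hx, hxS⟩ := exists_seq_tendsto_sInf hne hbdd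
  choose f g h hQ hM hP using hxS
  refine ⟨sInf S, f, g, h, hQ, hM, by simpa only [hP] using hx, fun f₁ g₁ h₁ => ?_⟩
  have hQ₁ : 0 ≤ powerIntegral c D f₁ (q + 1) := powerIntegral_nonneg h₁.nonneg
  have hP₁ := h₁.powerIntegral_slope_nonneg
  rcases (powerIntegral_nonneg (D := D) h₁.nonneg).eq_or_lt with hM₁ | hM₁
  · rw [← hM₁, Real.zero_rpow P.b_pos.ne', mul_zero]
    positivity
  · obtain ⟨f₂, g₂, h₂, hQ₂, hM₂, hP₂⟩ := P.exists_normalized h₁ hM₁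
    rw [← le_div_iff₀ (by positivity), ← hP₂]
    exact csInf_le hbdd ⟨f₂, g₂, h₂, hQ₂, hM₂, rfl⟩

end QuotientParameters

/-! ### Existence of a minimizer -/

/-- Exponents `α` for which `r ^ (-α)` bounds every finite-energy profile near the origin
(`le_energy`) while its `(m+1)`-st power stays integrable there; `bootstrap` is the gap that lets
the Euler–Lagrange equation improve such a bound. They exist exactly in the subcritical range. -/
structure OriginExponent (D p m α : ℝ) : Prop where
  pos : 0 < α
  le_energy : D ≤ (1 + α) * p
  integrable_rpow : (m + 1) * α < D
  bootstrap : (m - p + 1) * α < p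

/-- The common bound of a normalized sequence of profiles with bounded energy: the energy controls
it near the origin, the `(q+1)`-st power integral at infinity. -/
noncomputable def powerEnvelope (D q α K₁ K₂ : ℝ) (r : ℝ) : ℝ :=
  if r ≤ 1 then K₂ * r ^ (-α) else K₁ * r ^ (-(D / (q + 1)))

lemma integrable_powerEnvelope_rpow {c D q m α K₁ K₂ : ℝ} (hc : 0 < c) (hD : 0 < D) (hq : 0 ≤ q)
    (hqm : q < m) (hα : (m + 1) * α < D) (hK₁ : 0 ≤ K₁) (hK₂ : 0 ≤ K₂) :
    Integrable (fun r => powerEnvelope D q α K₁ K₂ r ^ (m + 1)) (radialMeasure c D) := by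
  have htail : D < D / (q + 1) * (m + 1) := by
    rw [div_mul_eq_mul_div, lt_div_iff₀ (by positivity)]
    gcongr
  have hnear : IntegrableOn (fun r => powerEnvelope D q α K₁ K₂ r ^ (m + 1)) (Ioc 0 1)
      (radialMeasure c D) := by
    refine IntegrableOn.congr_fun (f := fun r => K₂ ^ (m + 1) * r ^ (-((m + 1) * α)))
      ((integrableOn_Ioc_rpow_radialMeasure hc zero_le_one hα).const_mul _)
      (fun r hr => ?_) measurableSet_Ioc
    have hr0 : 0 < r := hr.1
    simp only [powerEnvelope, if_pos hr.2]
    rw [Real.mul_rpow hK₂ (by positivity), ← Real.rpow_mul hr0.le, neg_mul, mul_comm α]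
  have hfar : IntegrableOn (fun r => powerEnvelope D q α K₁ K₂ r ^ (m + 1)) (Ioi 1)
      (radialMeasure c D) := by
    refine IntegrableOn.congr_fun (f := fun r => K₁ ^ (m + 1) * r ^ (-(D / (q + 1) * (m + 1))))
      ((integrableOn_Ioi_rpow_radialMeasure hc one_pos htail).const_mul _)
      (fun r hr => ?_) measurableSet_Ioi
    have hr0 : 0 < r := one_pos.trans hr
    simp only [powerEnvelope, if_neg (not_le.2 (mem_Ioi.1 hr))]
    rw [Real.mul_rpow hK₁ (by positivity), ← Real.rpow_mul hr0.le, neg_mul]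
  have hunion := hnear.union hfar
  rwa [Ioc_union_Ioi_eq_Ioi zero_le_one, IntegrableOn, radialMeasure_restrict_Ioi_zero] at hunion

namespace RadialProfile

variable {c D p q m : ℝ} {f g : ℝ → ℝ} (h : RadialProfile c D p q m f g)

include h

lemma le_powerEnvelope (hc : 0 < c) (hD : 0 < D) (hp : 1 ≤ p) (hq : 0 ≤ q) {α B r : ℝ}
    (hα : OriginExponent D p m α) (hQ : powerIntegral c D f (q + 1) = 1)
    (hB : powerIntegral c D g p ≤ B) (hr : 0 < r) :
    f r ≤ powerEnvelope D q α ((D / c) ^ (1 / (q + 1)))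
      ((D / c) ^ (1 / (q + 1)) + α⁻¹ + B / c) r := by
  have hdecay : ∀ s, 0 < s → f s ≤ (D / c) ^ (1 / (q + 1)) * s ^ (-(D / (q + 1))) := by
    intro s hs
    simpa only [hQ, mul_one] using h.le_mul_rpow hc hD hq hs
  unfold powerEnvelope
  split_ifs with hr1
  · have hf1 := hdecay 1 one_pos
    rw [Real.one_rpow, mul_one] at hf1
    refine (h.le_mul_rpow_neg hc hp hα.pos hα.le_energy hr hr1).trans ?_
    gcongr
  · exact hdecay r hr

lemma sub_le_of_le (hc : 0 < c) (hD : 1 ≤ D) (hp : 1 < p) {B δ r s : ℝ}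
    (hB : powerIntegral c D g p ≤ B) (hδ : 0 < δ) (hr : δ ≤ r) (hrs : r ≤ s) :
    f r - f s ≤ (s - r) ^ (1 - 1 / p) * (B / (c * δ ^ (D - 1))) ^ (1 / p) := by
  have hr0 : 0 < r := hδ.trans_le hr
  have henergy := h.powerIntegral_slope_nonneg
  have : 0 ≤ s - r := sub_nonneg.2 hrs
  have : 0 ≤ D - 1 := sub_nonneg.2 hD
  have hB0 : 0 ≤ B := henergy.trans hB
  rw [h.sub_eq_setIntegral r s hr0 hrs]
  refine (setIntegral_Ioc_le_powerIntegral hc hD hp h.slope_nonneg h.slope_measurable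
    h.integrable_slope_rpow hr0 hrs).trans ?_
  gcongr

lemma dist_le_of_le (hc : 0 < c) (hD : 1 ≤ D) (hp : 1 < p) {B δ r s : ℝ}
    (hB : powerIntegral c D g p ≤ B) (hδ : 0 < δ) (hr : δ ≤ r) (hs : δ ≤ s) :
    dist (f r) (f s) ≤ dist r s ^ (1 - 1 / p) * (B / (c * δ ^ (D - 1))) ^ (1 / p) := by
  wlog hrs : r ≤ s generalizing r s
  · rw [dist_comm, dist_comm r]
    exact this hs hr (not_le.1 hrs).le
  have hmono : f s ≤ f r := h.antitoneOn (hδ.trans_le hr) (hδ.trans_le hs) hrs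
  rw [Real.dist_eq, abs_of_nonneg (sub_nonneg.2 hmono), dist_comm, Real.dist_eq,
    abs_of_nonneg (sub_nonneg.2 hrs)]
  exact h.sub_le_of_le hc hD hp hB hδ hr hrs

end RadialProfile

section Limits

variable {c D p q m B : ℝ} {f g : ℕ → ℝ → ℝ} {F G : ℝ → ℝ}

lemma equicontinuous_of_radialProfile (hc : 0 < c) (hD : 1 ≤ D) (hp : 1 < p)
    (h : ∀ k, RadialProfile c D p q m (f k) (g k)) (hB : ∀ k, powerIntegral c D (g k) p ≤ B) :
    Equicontinuous fun k (r : Ioi (0 : ℝ)) => f k r := by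
  intro x
  have hx : 0 < (x : ℝ) := x.2
  have hexp : 0 < 1 - 1 / p := sub_pos.2 ((div_lt_one (by linarith)).2 hp)
  have hmodulus : Tendsto (fun r : Ioi (0 : ℝ) => dist (x : ℝ) r ^ (1 - 1 / p) *
      (B / (c * ((x : ℝ) / 2) ^ (D - 1))) ^ (1 / p)) (𝓝 x) (𝓝 0) := by
    have hdist : Continuous fun r : Ioi (0 : ℝ) => dist (x : ℝ) r := by fun_prop
    have hlim := ((hdist.tendsto x).rpow_const (p := 1 - 1 / p) (Or.inr hexp.le)).mul_const
      ((B / (c * ((x : ℝ) / 2) ^ (D - 1))) ^ (1 / p))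
    rwa [dist_self, Real.zero_rpow hexp.ne', zero_mul] at hlim
  refine Metric.equicontinuousAt_of_continuity_modulus _ hmodulus _ ?_
  filter_upwards [continuous_subtype_val.continuousAt.eventually_const_lt (half_lt_self hx)]
    with r hr k
  exact (h k).dist_le_of_le hc hD hp (hB k) (half_pos hx) (half_le_self hx.le) hr.le

lemma exists_subseq_tendsto_of_radialProfile (hc : 0 < c) (hD : 1 ≤ D) (hp : 1 < p)
    (h : ∀ k, RadialProfile c D p q m (f k) (g k)) (hB : ∀ k, powerIntegral c D (g k) p ≤ B)
    {E : ℝ → ℝ} (hE : ∀ k r, 0 < r → f k r ≤ E r) :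
    ∃ φ : ℕ → ℕ, StrictMono φ ∧
      ∃ F : ℝ → ℝ, ∀ r, 0 < r → Tendsto (fun k => f (φ k) r) atTop (𝓝 (F r)) := by
  obtain ⟨φ, hφ, F, hF⟩ := exists_subseq_tendsto_of_equicontinuous
    (equicontinuous_of_radialProfile hc hD hp h hB) (B := fun r => E r) fun k r => by
      rw [abs_of_nonneg ((h k).nonneg r r.2)]
      exact hE k r r.2
  refine ⟨φ, hφ, fun r => if hr : 0 < r then F ⟨r, hr⟩ else 0, fun r hr => ?_⟩
  simpa only [dif_pos hr] using hF ⟨r, hr⟩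

lemma tendsto_setIntegral_Ioc_of_tendsto_powerIntegral (hc : 0 < c) (hD : 1 ≤ D) (hp : 1 < p)
    (hgm : ∀ k, Measurable (g k)) (hGm : Measurable G) {r s : ℝ} (hr : 0 < r) (hrs : r ≤ s)
    (hgi : ∀ k, IntegrableOn (g k) (Ioc r s)) (hGi : IntegrableOn G (Ioc r s))
    (hdiff : ∀ k, Integrable (fun t => |g k t - G t| ^ p) (radialMeasure c D))
    (hlim : Tendsto (fun k => powerIntegral c D (fun t => |g k t - G t|) p) atTop (𝓝 0)) :
    Tendsto (fun k => ∫ t in Ioc r s, g k t) atTop (𝓝 (∫ t in Ioc r s, G t)) := by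
  have hp0 : 0 < 1 / p := by positivity
  have hbound := ((hlim.div_const (c * r ^ (D - 1))).rpow_const (p := 1 / p)
    (Or.inr hp0.le)).const_mul ((s - r) ^ (1 - 1 / p))
  rw [zero_div, Real.zero_rpow hp0.ne', mul_zero] at hbound
  rw [tendsto_iff_dist_tendsto_zero]
  refine squeeze_zero (fun _ => dist_nonneg) (fun k => ?_) hbound
  rw [Real.dist_eq, ← integral_sub (hgi k) hGi]
  exact abs_integral_le_integral_abs.trans (setIntegral_Ioc_le_powerIntegral hc hD hp
    (fun _ => abs_nonneg _) ((hgm k).sub hGm).abs (hdiff k) hr hrs)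

lemma RadialProfile.of_tendsto (hc : 0 < c) (hD : 1 ≤ D) (hp : 1 < p)
    (h : ∀ k, RadialProfile c D p q m (f k) (g k))
    (hF : ∀ r, 0 < r → Tendsto (fun k => f k r) atTop (𝓝 (F r))) (hGm : Measurable G)
    (hG : ∀ r, 0 ≤ G r) (hFq : Integrable (fun r => F r ^ (q + 1)) (radialMeasure c D))
    (hFm : Integrable (fun r => F r ^ (m + 1)) (radialMeasure c D))
    (hGp : Integrable (fun r => G r ^ p) (radialMeasure c D))
    (hdiff : ∀ k, Integrable (fun r => |g k r - G r| ^ p) (radialMeasure c D))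
    (hlim : Tendsto (fun k => powerIntegral c D (fun r => |g k r - G r|) p) atTop (𝓝 0)) :
    RadialProfile c D p q m F G where
  nonneg r hr := ge_of_tendsto' (hF r hr) fun k => (h k).nonneg r hr
  slope_nonneg := hG
  slope_measurable := hGm
  slope_integrableOn _ _ hr _ := integrableOn_Ioc_of_integrable_rpow hc hD hp.le hG hGm hGp hr
  sub_eq_setIntegral r s hr hrs := by
    refine tendsto_nhds_unique ((hF r hr).sub (hF s (hr.trans_le hrs))) ?_
    simp only [fun k => (h k).sub_eq_setIntegral r s hr hrs]
    exact tendsto_setIntegral_Ioc_of_tendsto_powerIntegral hc hD hp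
      (fun k => (h k).slope_measurable) hGm hr hrs (fun k => (h k).slope_integrableOn r s hr hrs)
      (integrableOn_Ioc_of_integrable_rpow hc hD hp.le hG hGm hGp hr) hdiff hlim
  integrable_rpow_q := hFq
  integrable_rpow_m := hFm
  integrable_slope_rpow := hGp

end Limits

namespace MinimizingSequence

variable {c D p q m a b β : ℝ} {f g : ℕ → ℝ → ℝ} {E F : ℝ → ℝ}
  (S : MinimizingSequence c D p q m a b β f g) (P : QuotientParameters c D p q m a b)

include S

lemma exists_energy_le : ∃ B, ∀ k, powerIntegral c D (g k) p ≤ B := by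
  obtain ⟨B, hB⟩ := S.tendsto_energy.bddAbove_range
  exact ⟨B, fun k => hB ⟨k, rfl⟩⟩

lemma comp {φ : ℕ → ℕ} (hφ : StrictMono φ) :
    MinimizingSequence c D p q m a b β (fun k => f (φ k)) (fun k => g (φ k)) where
  profile k := S.profile (φ k)
  powerIntegral_q k := S.powerIntegral_q (φ k)
  powerIntegral_m k := S.powerIntegral_m (φ k)
  tendsto_energy := S.tendsto_energy.comp hφ.tendsto_atTop
  isQuotientLowerBound := S.isQuotientLowerBound

include P

lemma exists_envelope {α : ℝ} (hα : OriginExponent D p m α) :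
    ∃ E : ℝ → ℝ, Integrable (fun r => E r ^ (m + 1)) (radialMeasure c D) ∧
      ∀ k r, 0 < r → f k r ≤ E r := by
  obtain ⟨B, hB⟩ := S.exists_energy_le
  have hB0 : 0 ≤ B := (S.profile 0).powerIntegral_slope_nonneg.trans (hB 0)
  have hc := P.c_pos
  have hD := P.D_pos
  have hα0 := hα.pos
  exact ⟨_, integrable_powerEnvelope_rpow hc hD P.q_nonneg P.q_lt_m hα.integrable_rpow
      (by positivity) (by positivity),
    fun k r hr => (S.profile k).le_powerEnvelope hc hD P.one_lt_p.le P.q_nonneg hα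
      (S.powerIntegral_q k) (hB k) hr⟩

lemma energy_midpoint_ge (z : ℕ × ℕ) :
    β * powerIntegral c D (fun r => (f z.1 r + f z.2 r) / 2) (m + 1) ^ b ≤
      powerIntegral c D (fun r => (g z.1 r + g z.2 r) / 2) p := by
  have hmid := (S.profile z.1).midpoint (S.profile z.2) P.one_lt_p.le P.q_nonneg P.m_nonneg
  have hQ : powerIntegral c D (fun r => (f z.1 r + f z.2 r) / 2) (q + 1) ≤ 1 := by
    have hconvex := integral_rpow_convexCombination_le (n := q + 1) (by linarith [P.q_nonneg])
      (S.profile z.1).ae_nonneg (S.profile z.2).ae_nonneg (S.profile z.1).aemeasurable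
      (S.profile z.2).aemeasurable (S.profile z.1).integrable_rpow_q
      (S.profile z.2).integrable_rpow_q one_half_pos.le one_half_lt_one.le
    convert hconvex using 1
    · unfold powerIntegral
      congr! 3
      ring
    · have h₁ := S.powerIntegral_q z.1
      have h₂ := S.powerIntegral_q z.2
      unfold powerIntegral at h₁ h₂
      rw [h₁, h₂]
      norm_num
  exact (S.isQuotientLowerBound _ _ hmid).trans (mul_le_of_le_one_left
    hmid.powerIntegral_slope_nonneg
    (Real.rpow_le_one (powerIntegral_nonneg hmid.nonneg) hQ P.a_pos.le))

variable (hE : Integrable (fun r => E r ^ (m + 1)) (radialMeasure c D))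
  (hfE : ∀ k r, 0 < r → f k r ≤ E r)
  (hF : ∀ r, 0 < r → Tendsto (fun k => f k r) atTop (𝓝 (F r)))

include hE hfE hF

lemma powerIntegral_limit_m : powerIntegral c D F (m + 1) = 1 := by
  have hlim := tendsto_integral_rpow_of_le (l := atTop) (n := m + 1) (by linarith [P.m_nonneg])
    (fun k => (S.profile k).aemeasurable) (fun k => (S.profile k).ae_nonneg)
    (fun k => ae_radialMeasure_of_forall_pos (hfE k)) hE (ae_radialMeasure_of_forall_pos hF)
  exact tendsto_nhds_unique hlim (tendsto_const_nhds.congr fun k => (S.powerIntegral_m k).symm)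

lemma tendsto_powerIntegral_midpoint :
    Tendsto (fun z : ℕ × ℕ => powerIntegral c D (fun r => (f z.1 r + f z.2 r) / 2) (m + 1)) atTop
      (𝓝 1) := by
  nth_rewrite 2 [← S.powerIntegral_limit_m P hE hfE hF]
  have hmid := fun z : ℕ × ℕ =>
    (S.profile z.1).midpoint (S.profile z.2) P.one_lt_p.le P.q_nonneg P.m_nonneg
  refine tendsto_integral_rpow_of_le (l := atTop)
    (X := fun (z : ℕ × ℕ) r => (f z.1 r + f z.2 r) / 2) (by linarith [P.m_nonneg])
    (fun z => (hmid z).aemeasurable) (fun z => (hmid z).ae_nonneg)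
    (fun z => ae_radialMeasure_of_forall_pos fun r hr => ?_) hE
    (ae_radialMeasure_of_forall_pos fun r hr => ?_)
  · linarith [hfE z.1 r hr, hfE z.2 r hr]
  · obtain ⟨hfst, hsnd⟩ := tendsto_fst_snd_prod_atTop (hF r hr)
    simpa only [add_self_div_two] using (hfst.add hsnd).div_const 2

lemma tendsto_integral_abs_slope_sub :
    Tendsto (fun z : ℕ × ℕ => ∫ r, |g z.1 r - g z.2 r| ^ p ∂radialMeasure c D) atTop (𝓝 0) := by
  refine tendsto_integral_abs_sub_rpow_zero P.one_lt_p (fun k => (S.profile k).slope_nonneg)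
    (fun k => (S.profile k).integrable_slope_rpow) (fun z => ((S.profile z.1).midpoint
      (S.profile z.2) P.one_lt_p.le P.q_nonneg P.m_nonneg).integrable_slope_rpow)
    S.tendsto_energy (S.energy_midpoint_ge P) ?_
  simpa only [Real.one_rpow, mul_one] using ((S.tendsto_powerIntegral_midpoint P hE hfE
    hF).rpow_const (p := b) (Or.inr P.b_pos.le)).const_mul β

lemma exists_limit_profile :
    ∃ G, RadialProfile c D p q m F G ∧ powerIntegral c D G p = β ∧
      powerIntegral c D F (q + 1) ≤ 1 := by
  obtain ⟨hFq, hQ⟩ := integrable_and_integral_le_of_tendsto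
    (X := fun k r => f k r ^ (q + 1)) (Y := fun r => F r ^ (q + 1))
    (fun k => ae_radialMeasure_of_forall_pos fun r hr =>
      Real.rpow_nonneg ((S.profile k).nonneg r hr) _)
    (fun k => (S.profile k).integrable_rpow_q)
    (ae_radialMeasure_of_forall_pos fun r hr =>
      (hF r hr).rpow_const (Or.inr (by linarith [P.q_nonneg])))
    (fun k => (S.powerIntegral_q k).le)
  have hFm : Integrable (fun r => F r ^ (m + 1)) (radialMeasure c D) :=
    integrable_rpow_of_le (by linarith [P.m_nonneg])
      (aemeasurable_of_tendsto_metrizable_ae atTop (fun k => (S.profile k).aemeasurable)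
        (ae_radialMeasure_of_forall_pos hF))
      (ae_radialMeasure_of_forall_pos fun r hr =>
        ge_of_tendsto' (hF r hr) fun k => (S.profile k).nonneg r hr)
      (ae_radialMeasure_of_forall_pos fun r hr => le_of_tendsto' (hF r hr) fun k => hfE k r hr) hE
  obtain ⟨G, hGm, hG, hGp, hdiff, hlim, henergy⟩ :=
    exists_tendsto_integral_abs_sub_rpow_zero P.one_lt_p.le
      (fun k => (S.profile k).slope_nonneg) (fun k => (S.profile k).slope_measurable)
      (fun k => (S.profile k).integrable_slope_rpow) (S.tendsto_integral_abs_slope_sub P hE hfE hF)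
  exact ⟨G, RadialProfile.of_tendsto P.c_pos P.one_le_D P.one_lt_p S.profile hF hGm hG hFq hFm hGp
    hdiff hlim, tendsto_nhds_unique henergy S.tendsto_energy, hQ⟩

lemma exists_isNormalizedMinimizer_of_tendsto : ∃ G, IsNormalizedMinimizer c D p q m a b F G := by
  obtain ⟨G, hprofile, henergy, hQ⟩ := S.exists_limit_profile P hE hfE hF
  have hM := S.powerIntegral_limit_m P hE hfE hF
  have hpos : 0 < powerIntegral c D G p := hprofile.powerIntegral_slope_pos P.c_pos P.D_pos
    (by linarith [P.one_lt_p]) P.q_nonneg (by linarith [P.m_nonneg]) (by rw [hM]; exact one_pos)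
  have hQ1 : powerIntegral c D F (q + 1) = 1 := by
    refine hQ.antisymm (le_of_not_gt fun hlt => ?_)
    have hlower := S.isQuotientLowerBound F G hprofile
    rw [hM, Real.one_rpow, mul_one, ← henergy, le_mul_iff_one_le_left hpos] at hlower
    exact hlower.not_gt (Real.rpow_lt_one (powerIntegral_nonneg hprofile.nonneg) hlt P.a_pos)
  exact ⟨G, hprofile, hQ1, hM, henergy ▸ S.isQuotientLowerBound⟩

end MinimizingSequence

lemma QuotientParameters.exists_isNormalizedMinimizer {c D p q m a b α : ℝ}
    (P : QuotientParameters c D p q m a b) (hα : OriginExponent D p m α) :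
    ∃ f g, IsNormalizedMinimizer c D p q m a b f g := by
  obtain ⟨β, f, g, S⟩ := P.exists_minimizingSequence
  obtain ⟨E, hE, hfE⟩ := S.exists_envelope P hα
  obtain ⟨B, hB⟩ := S.exists_energy_le
  obtain ⟨φ, hφ, F, hF⟩ :=
    exists_subseq_tendsto_of_radialProfile P.c_pos P.one_le_D P.one_lt_p S.profile hB hfE
  exact ⟨F, (S.comp hφ).exists_isNormalizedMinimizer_of_tendsto P hE (fun k => hfE (φ k)) hF⟩

/-! ### Euler–Lagrange equation -/

lemma integrable_rpow_of_le_add {α : Type*} [MeasurableSpace α] {μ : Measure α} {n : ℝ}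
    {X Y Z : α → ℝ} (hn : 1 ≤ n) (hX : 0 ≤ᵐ[μ] X) (hY : 0 ≤ᵐ[μ] Y) (hZ : 0 ≤ᵐ[μ] Z)
    (hXm : AEMeasurable X μ) (hYm : AEMeasurable Y μ) (hZm : AEMeasurable Z μ)
    (hXi : Integrable (fun x => X x ^ n) μ) (hYi : Integrable (fun x => Y x ^ n) μ)
    (hle : ∀ᵐ x ∂μ, Z x ≤ X x + Y x) : Integrable (fun x => Z x ^ n) μ := by
  have hmid := integrable_rpow_convexCombination hn hX hY hXm hYm hXi hYi one_half_pos.le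
    one_half_lt_one.le
  refine Integrable.mono' (hmid.const_mul (2 ^ n)) (hZm.pow_const n).aestronglyMeasurable ?_
  filter_upwards [hX, hY, hZ, hle] with x hx hy hz hxyz
  have hx : 0 ≤ X x := hx
  have hy : 0 ≤ Y x := hy
  rw [Real.norm_of_nonneg (Real.rpow_nonneg hz _), ← Real.mul_rpow zero_le_two (by linarith)]
  exact Real.rpow_le_rpow hz (by linarith) (by linarith)

lemma integral_mul_setIntegral_Ioi {μ ν : Measure ℝ} [SFinite μ] [SFinite ν] {k h : ℝ → ℝ}
    (hk : Integrable k μ) (hh : Integrable h ν) :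
    ∫ r, k r * ∫ s in Ioi r, h s ∂ν ∂μ = ∫ s, (∫ r in Iio s, k r ∂μ) * h s ∂ν := by
  have hint : Integrable ({z : ℝ × ℝ | z.1 < z.2}.indicator fun z => k z.1 * h z.2)
      (μ.prod ν) :=
    (hk.mul_prod hh).indicator (measurableSet_lt measurable_fst measurable_snd)
  convert integral_integral_swap
    (f := fun r s => {z : ℝ × ℝ | z.1 < z.2}.indicator (fun z => k z.1 * h z.2) (r, s)) hint
    using 3 with r s
  · rw [← integral_const_mul, ← integral_indicator measurableSet_Ioi]
    rfl
  · rw [← integral_mul_const, ← integral_indicator measurableSet_Iio]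
    rfl

/-- `∫ h` over `(r, ∞)`: the decreasing-variable primitive by which a perturbation `h` of the slope
perturbs the profile. -/
noncomputable def tailIntegral (h : ℝ → ℝ) (r : ℝ) : ℝ := ∫ s in Ioi r, h s

section TailIntegral

variable {h : ℝ → ℝ} {r s R : ℝ}

lemma tailIntegral_sub (hh : Integrable h) (hrs : r ≤ s) :
    tailIntegral h r - tailIntegral h s = ∫ t in Ioc r s, h t := by
  have hsplit := setIntegral_union (f := h) (Ioc_disjoint_Ioi_same (a := r) (b := s))
    measurableSet_Ioi hh.integrableOn hh.integrableOn
  rw [Ioc_union_Ioi_eq_Ioi hrs] at hsplit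
  rw [tailIntegral, tailIntegral, hsplit, add_sub_cancel_right]

lemma tailIntegral_eq_zero (hR : ∀ t, R < t → h t = 0) (hr : R ≤ r) : tailIntegral h r = 0 :=
  setIntegral_eq_zero_of_forall_eq_zero fun t ht => hR t (hr.trans_lt ht)

lemma tailIntegral_le_indicator (hh : Integrable h) (hR : ∀ t, R < t → h t = 0) :
    tailIntegral h r ≤ (Iic R).indicator (fun _ => ∫ t, |h t|) r := by
  rcases le_or_gt r R with hr | hr
  · rw [indicator_of_mem (mem_Iic.2 hr)]
    exact (le_abs_self _).trans (abs_integral_le_integral_abs.trans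
      (setIntegral_le_integral hh.abs (Eventually.of_forall fun _ => abs_nonneg _)))
  · rw [indicator_of_notMem (notMem_Iic.2 hr), tailIntegral_eq_zero hR hr.le]

end TailIntegral

lemma integrable_indicator_Iic_rpow_radialMeasure {c D R K n : ℝ} (hc : 0 < c) (hD : 0 < D)
    (hR : 0 ≤ R) (hn : n ≠ 0) :
    Integrable (fun r => (Iic R).indicator (fun _ => K) r ^ n) (radialMeasure c D) := by
  have hpow : (fun r => (Iic R).indicator (fun _ => K) r ^ n) =
      (Iic R).indicator fun _ => K ^ n := by
    ext r
    by_cases hr : r ∈ Iic R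
    · simp only [indicator_of_mem hr]
    · simp only [indicator_of_notMem hr, Real.zero_rpow hn]
  rw [hpow, ← radialMeasure_restrict_Ioi_zero, integrable_indicator_iff measurableSet_Iic,
    IntegrableOn, Measure.restrict_restrict measurableSet_Iic, inter_comm, Ioi_inter_Iic]
  exact integrableOn_const (radialMeasure_Ioc_zero_lt_top hc hD hR).ne

lemma integrable_rpow_of_le_add_indicator {c D R K n : ℝ} {f F : ℝ → ℝ} (hc : 0 < c)
    (hD : 0 < D) (hR : 0 ≤ R) (hn : 1 ≤ n) (hK : 0 ≤ K) (hf : 0 ≤ᵐ[radialMeasure c D] f)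
    (hF : 0 ≤ᵐ[radialMeasure c D] F) (hfm : AEMeasurable f (radialMeasure c D))
    (hFm : AEMeasurable F (radialMeasure c D))
    (hfn : Integrable (fun r => f r ^ n) (radialMeasure c D))
    (hle : ∀ r, F r ≤ f r + (Iic R).indicator (fun _ => K) r) :
    Integrable (fun r => F r ^ n) (radialMeasure c D) :=
  integrable_rpow_of_le_add (Y := (Iic R).indicator fun _ => K) hn hf
    (Eventually.of_forall (indicator_nonneg fun _ _ => hK)) hF hfm
    (measurable_const.indicator measurableSet_Iic).aemeasurable hFm hfn
    (integrable_indicator_Iic_rpow_radialMeasure hc hD hR (by linarith))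
    (Eventually.of_forall hle)

namespace RadialProfile

variable {c D p q m : ℝ} {f g : ℝ → ℝ} (h : RadialProfile c D p q m f g)

include h

lemma add_tailIntegral (hc : 0 < c) (hD : 0 < D) (hq : 0 ≤ q) (hm : 0 ≤ m) {k : ℝ → ℝ} {R : ℝ}
    (hR : 0 < R) (hkR : ∀ t, R < t → k t = 0) (hk : Integrable k) (hkm : Measurable k)
    (hgk : ∀ r, 0 ≤ g r + k r)
    (hgkp : Integrable (fun r => (g r + k r) ^ p) (radialMeasure c D)) :
    RadialProfile c D p q m (fun r => f r + tailIntegral k r) (fun r => g r + k r) := by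
  have hsub : ∀ r s, 0 < r → r ≤ s →
      f r + tailIntegral k r - (f s + tailIntegral k s) = ∫ t in Ioc r s, (g t + k t) := by
    intro r s hr hrs
    rw [integral_add (h.slope_integrableOn r s hr hrs) hk.integrableOn,
      ← h.sub_eq_setIntegral r s hr hrs, ← tailIntegral_sub hk hrs]
    ring
  have hanti : AntitoneOn (fun r => f r + tailIntegral k r) (Ioi 0) := by
    intro r hr s _ hrs
    rw [← sub_nonneg, hsub r s hr hrs]
    exact integral_nonneg hgk
  have hnonneg : ∀ r, 0 < r → 0 ≤ f r + tailIntegral k r := by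
    intro r hr
    have hmax : 0 < max r R := lt_max_of_lt_left hr
    calc 0 ≤ f (max r R) := h.nonneg _ hmax
      _ = f (max r R) + tailIntegral k (max r R) := by
          rw [tailIntegral_eq_zero hkR (le_max_right r R), add_zero]
      _ ≤ f r + tailIntegral k r := hanti hr hmax (le_max_left r R)
  have hpow : ∀ n : ℝ, 1 ≤ n → Integrable (fun r => f r ^ n) (radialMeasure c D) →
      Integrable (fun r => (f r + tailIntegral k r) ^ n) (radialMeasure c D) := fun n hn hfn =>
    integrable_rpow_of_le_add_indicator (F := fun r => f r + tailIntegral k r)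
      (K := ∫ t, |k t|) hc hD hR.le hn (integral_nonneg fun t => abs_nonneg (k t)) h.ae_nonneg
      (ae_radialMeasure_of_forall_pos hnonneg) h.aemeasurable
      (aemeasurable_radialMeasure_of_antitoneOn hanti) hfn
      fun r => add_le_add_right (tailIntegral_le_indicator hk hkR) (f r)
  exact ⟨hnonneg, hgk, h.slope_measurable.add hkm,
    fun r s hr hrs => (h.slope_integrableOn r s hr hrs).add hk.integrableOn, hsub,
    hpow _ (by linarith) h.integrable_rpow_q, hpow _ (by linarith) h.integrable_rpow_m, hgkp⟩

lemma replace_slope (hc : 0 < c) (hD : 0 < D) (hq : 0 ≤ q) (hm : 0 ≤ m) {G : ℝ → ℝ}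
    {r₀ r₁ : ℝ} (hr₀ : 0 < r₀) (hr : r₀ ≤ r₁) (hG : ∀ r, 0 ≤ G r) (hGm : Measurable G)
    (hGi : IntegrableOn G (Ioc r₀ r₁))
    (hGp : IntegrableOn (fun r => G r ^ p) (Ioc r₀ r₁) (radialMeasure c D)) :
    RadialProfile c D p q m
      (fun r => f r + tailIntegral ((Ioc r₀ r₁).indicator fun s => G s - g s) r)
      (fun r => g r + (Ioc r₀ r₁).indicator (fun s => G s - g s) r) := by
  refine h.add_tailIntegral hc hD hq hm (hr₀.trans_le hr)
    (fun t ht => indicator_of_notMem (fun hmem => ht.not_ge hmem.2) _)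
    ((hGi.sub (h.slope_integrableOn r₀ r₁ hr₀ hr)).integrable_indicator measurableSet_Ioc)
    ((hGm.sub h.slope_measurable).indicator measurableSet_Ioc) (fun r => ?_) ?_
  · by_cases hmem : r ∈ Ioc r₀ r₁
    · simpa [hmem] using hG r
    · simpa [hmem] using h.slope_nonneg r
  · refine ((hGp.integrable_indicator measurableSet_Ioc).add
      (h.integrable_slope_rpow.indicator (measurableSet_Ioc (a := r₀) (b := r₁)).compl)).congr
      (Eventually.of_forall fun r => ?_)
    by_cases hmem : r ∈ Ioc r₀ r₁
    · simp [hmem]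
    · simp [hmem]

end RadialProfile

/-- `∫₀^r k(s) c s^(D-1) ds`; it vanishes for `r ≤ 0`. The Euler–Lagrange equation equates the flux
of the source term to `p c r^(D-1) g(r)^(p-1)`. -/
noncomputable def flux (c D : ℝ) (k : ℝ → ℝ) (r : ℝ) : ℝ :=
  ∫ s in Ioc 0 r, k s ∂radialMeasure c D

/-- The slope `g` solving `p c r^(D-1) g^(p-1) = flux`, truncated to zero where the flux is
negative. -/
noncomputable def eulerLagrangeSlope (c D p : ℝ) (k : ℝ → ℝ) (r : ℝ) : ℝ :=
  (max (flux c D k r) 0 / (p * (c * r ^ (D - 1)))) ^ (1 / (p - 1))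

section Flux

variable {c D p : ℝ} {k : ℝ → ℝ} {r : ℝ}

lemma flux_of_nonpos (hr : r ≤ 0) : flux c D k r = 0 := by
  rw [flux, Ioc_eq_empty_of_le hr, setIntegral_empty]

lemma flux_eq_intervalIntegral : flux c D k r = ∫ s in (0 : ℝ)..r, k s ∂radialMeasure c D := by
  rcases le_total 0 r with hr | hr
  · rw [flux, intervalIntegral.integral_of_le hr]
  · rw [flux_of_nonpos hr, intervalIntegral.integral_of_ge hr, ← radialMeasure_restrict_Ioi_zero,
      Measure.restrict_restrict measurableSet_Ioc, disjoint_iff_inter_eq_empty.1,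
      Measure.restrict_empty, integral_zero_measure, neg_zero]
    exact disjoint_left.2 fun s hs hs0 => hs.2.not_gt hs0

lemma continuous_flux (hk : ∀ R, IntegrableOn k (Ioc 0 R) (radialMeasure c D)) :
    Continuous (flux c D k) := by
  have hIic : ∀ R, IntegrableOn k (Iic R) (radialMeasure c D) := by
    intro R
    rw [IntegrableOn, ← radialMeasure_restrict_Ioi_zero,
      Measure.restrict_restrict measurableSet_Iic, inter_comm, Ioi_inter_Iic]
    exact hk R
  have : NullSingletonClass (radialMeasure c D) := nullSingletonClass_withDensity _
  rw [funext fun r => flux_eq_intervalIntegral (k := k) (c := c) (D := D) (r := r)]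
  exact intervalIntegral.continuous_primitive
    (fun x y => intervalIntegrable_iff.2 ((hIic (max x y)).mono_set fun t ht => ht.2)) 0

lemma eulerLagrangeSlope_of_nonpos (hp : p ≠ 1) (hr : r ≤ 0) :
    eulerLagrangeSlope c D p k r = 0 := by
  rw [eulerLagrangeSlope, flux_of_nonpos hr, max_self, zero_div,
    Real.zero_rpow (one_div_ne_zero (sub_ne_zero.2 hp))]

lemma eulerLagrangeSlope_nonneg (hc : 0 < c) (hp : 1 < p) : 0 ≤ eulerLagrangeSlope c D p k r := by
  rcases le_or_gt r 0 with hr | hr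
  · rw [eulerLagrangeSlope_of_nonpos hp.ne' hr]
  · have : 0 < p := zero_lt_one.trans hp
    unfold eulerLagrangeSlope
    positivity

lemma measurable_eulerLagrangeSlope (hk : ∀ R, IntegrableOn k (Ioc 0 R) (radialMeasure c D)) :
    Measurable (eulerLagrangeSlope c D p k) := by
  have := (continuous_flux hk).measurable
  unfold eulerLagrangeSlope
  fun_prop

lemma continuousOn_eulerLagrangeSlope (hc : 0 < c) (hp : 1 < p)
    (hk : ∀ R, IntegrableOn k (Ioc 0 R) (radialMeasure c D)) :
    ContinuousOn (eulerLagrangeSlope c D p k) (Ioi 0) := by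
  have : 0 < p - 1 := sub_pos.2 hp
  have : 0 < p := zero_lt_one.trans hp
  have hpow : ContinuousOn (fun r : ℝ => r ^ (D - 1)) (Ioi 0) :=
    continuousOn_id.rpow_const fun r hr => Or.inl (ne_of_gt hr)
  refine (((continuous_flux hk).continuousOn.sup continuousOn_const).div
    (continuousOn_const.mul (continuousOn_const.mul hpow)) fun r hr => ?_).rpow_const
    fun _ _ => Or.inr (by positivity)
  have hr : 0 < r := hr
  exact (by positivity : p * (c * r ^ (D - 1)) ≠ 0)

lemma mul_eulerLagrangeSlope_rpow (hc : 0 < c) (hp : 1 < p) (hr : 0 < r) :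
    p * (c * r ^ (D - 1)) * eulerLagrangeSlope c D p k r ^ (p - 1) = max (flux c D k r) 0 := by
  have hp1 : 0 < p - 1 := sub_pos.2 hp
  have : 0 < p := zero_lt_one.trans hp
  rw [eulerLagrangeSlope, ← Real.rpow_mul (by positivity), one_div_mul_cancel hp1.ne',
    Real.rpow_one, mul_div_cancel₀ _ (by positivity)]

lemma integrableOn_eulerLagrangeSlope (hc : 0 < c) (hp : 1 < p)
    (hk : ∀ R, IntegrableOn k (Ioc 0 R) (radialMeasure c D)) {r₀ r₁ : ℝ} (hr₀ : 0 < r₀) :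
    IntegrableOn (eulerLagrangeSlope c D p k) (Ioc r₀ r₁) :=
  ((continuousOn_eulerLagrangeSlope hc hp hk).mono
    fun _ hr => hr₀.trans_le hr.1).integrableOn_Icc.mono_set Ioc_subset_Icc_self

lemma integrableOn_eulerLagrangeSlope_rpow (hc : 0 < c) (hp : 1 < p)
    (hk : ∀ R, IntegrableOn k (Ioc 0 R) (radialMeasure c D)) {r₀ r₁ : ℝ} (hr₀ : 0 < r₀) :
    IntegrableOn (fun r => eulerLagrangeSlope c D p k r ^ p) (Ioc r₀ r₁) (radialMeasure c D) := by
  rw [integrableOn_radialMeasure_iff hc measurableSet_Ioc fun r hr => hr₀.trans hr.1]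
  refine (ContinuousOn.integrableOn_Icc ?_).mono_set Ioc_subset_Icc_self
  have hcont := (continuousOn_eulerLagrangeSlope hc hp hk).mono
    (fun _ hr => hr₀.trans_le hr.1 : Icc r₀ r₁ ⊆ Ioi 0)
  have hpow : ContinuousOn (fun r : ℝ => r ^ (D - 1)) (Icc r₀ r₁) :=
    continuousOn_id.rpow_const fun r hr => Or.inl (hr₀.trans_le hr.1).ne'
  exact (continuousOn_const.mul hpow).mul
    (hcont.rpow_const fun _ _ => Or.inr (zero_lt_one.trans hp).le)

lemma integral_mul_tailIntegral_indicator {h : ℝ → ℝ} {r₀ r₁ : ℝ}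
    (hk : IntegrableOn k (Ioc 0 r₁) (radialMeasure c D)) (hh : IntegrableOn h (Ioc r₀ r₁)) :
    ∫ r, k r * tailIntegral ((Ioc r₀ r₁).indicator h) r ∂radialMeasure c D =
      ∫ s in Ioc r₀ r₁, flux c D k s * h s := by
  have : NullSingletonClass (radialMeasure c D) := nullSingletonClass_withDensity _
  have : SFinite (radialMeasure c D) := by unfold radialMeasure; infer_instance
  have hsupport : ∀ r ∉ Ioc 0 r₁, 0 < r → tailIntegral ((Ioc r₀ r₁).indicator h) r = 0 :=
    fun r hr hr0 => tailIntegral_eq_zero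
      (fun t ht => indicator_of_notMem (fun hmem => ht.not_ge hmem.2) _)
      (le_of_not_ge fun hle => hr ⟨hr0, hle⟩)
  calc ∫ r, k r * tailIntegral ((Ioc r₀ r₁).indicator h) r ∂radialMeasure c D
      = ∫ r in Ioc 0 r₁, k r * tailIntegral ((Ioc r₀ r₁).indicator h) r ∂radialMeasure c D := by
        rw [← radialMeasure_restrict_Ioi_zero, Measure.restrict_restrict measurableSet_Ioc,
          inter_eq_left.2 Ioc_subset_Ioi_self]
        refine setIntegral_eq_of_subset_of_forall_sdiff_eq_zero measurableSet_Ioi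
          Ioc_subset_Ioi_self fun r hr => ?_
        rw [hsupport r hr.2 hr.1, mul_zero]
    _ = ∫ s, (∫ r in Iio s, k r ∂(radialMeasure c D).restrict (Ioc 0 r₁)) *
          (Ioc r₀ r₁).indicator h s :=
        integral_mul_setIntegral_Ioi hk (hh.integrable_indicator measurableSet_Ioc)
    _ = ∫ s in Ioc r₀ r₁, flux c D k s * h s := by
        rw [← integral_indicator measurableSet_Ioc]
        congr 1 with s
        by_cases hs : s ∈ Ioc r₀ r₁
        · have hIoo : Iio s ∩ Ioc 0 r₁ = Ioo 0 s := by
            ext t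
            exact ⟨fun ht => ⟨ht.2.1, ht.1⟩, fun ht => ⟨ht.2, ht.1, ht.2.le.trans hs.2⟩⟩
          rw [indicator_of_mem hs, indicator_of_mem hs, Measure.restrict_restrict measurableSet_Iio,
            hIoo, ← integral_Ioc_eq_integral_Ioo, flux]
        · rw [indicator_of_notMem hs, indicator_of_notMem hs, mul_zero]

end Flux

lemma mul_rpow_mul_sub_lt {e x y z ψ : ℝ} (he : 0 < e) (hz : 0 < z) (hx : 0 ≤ x) (hy : 0 ≤ y)
    (hψ : z * y ^ e = max ψ 0) (hxy : x ≠ y) : z * x ^ e * (y - x) < ψ * (y - x) := by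
  rcases hxy.lt_or_gt with hlt | hgt
  · have hpow : z * x ^ e < max ψ 0 := by
      rw [← hψ]
      gcongr
    have : z * x ^ e < ψ :=
      (lt_max_iff.1 hpow).resolve_right (not_lt.2 (by positivity))
    exact mul_lt_mul_of_pos_right this (sub_pos.2 hlt)
  · have : ψ < z * x ^ e := by
      refine (le_max_left ψ 0).trans_lt ?_
      rw [← hψ]
      gcongr
    exact mul_lt_mul_of_neg_right this (sub_neg.2 hgt)

lemma mul_integral_rpow_mul_indicator {c D p r₀ r₁ : ℝ} {g h : ℝ → ℝ} (hc : 0 < c) (hr₀ : 0 ≤ r₀) :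
    p * ∫ r, g r ^ (p - 1) * (Ioc r₀ r₁).indicator h r ∂radialMeasure c D =
      ∫ r in Ioc r₀ r₁, p * (c * r ^ (D - 1)) * g r ^ (p - 1) * h r := by
  have hsub : Ioc r₀ r₁ ⊆ Ioi 0 := fun r hr => hr₀.trans_lt hr.1
  have hindicator : (fun r => g r ^ (p - 1) * (Ioc r₀ r₁).indicator h r) =
      (Ioc r₀ r₁).indicator fun r => g r ^ (p - 1) * h r :=
    funext fun _ => (indicator_mul_right (Ioc r₀ r₁) (fun r => g r ^ (p - 1)) h).symm
  rw [hindicator, integral_indicator measurableSet_Ioc,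
    setIntegral_radialMeasure hc measurableSet_Ioc hsub, ← integral_const_mul]
  simp only [mul_assoc]

/-- The right-hand side of the Euler–Lagrange equation of a normalized minimizer `f` whose energy
is `β`. -/
noncomputable def eulerLagrangeSource (β a b q m : ℝ) (f : ℝ → ℝ) (r : ℝ) : ℝ :=
  β * (b * (m + 1) * f r ^ m - a * (q + 1) * f r ^ q)

namespace RadialProfile

variable {c D p q m : ℝ} {f g : ℝ → ℝ} (h : RadialProfile c D p q m f g)

include h

lemma integrableOn_rpow_of_integrable_rpow_add_one (hc : 0 < c) (hD : 0 < D) {n : ℝ} (hn : 0 ≤ n)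
    (hf : Integrable (fun r => f r ^ (n + 1)) (radialMeasure c D)) (R : ℝ) :
    IntegrableOn (fun r => f r ^ n) (Ioc 0 R) (radialMeasure c D) := by
  rcases le_or_gt R 0 with hR | hR
  · rw [Ioc_eq_empty_of_le hR]
    exact integrableOn_empty
  refine ((integrableOn_const (C := (1 : ℝ))
    (radialMeasure_Ioc_zero_lt_top hc hD hR.le).ne).add hf.integrableOn).mono'
    (h.aemeasurable.pow_const n).aestronglyMeasurable.restrict ?_
  filter_upwards [ae_restrict_of_ae h.ae_nonneg] with r hr
  have hr : 0 ≤ f r := hr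
  rw [Real.norm_of_nonneg (by positivity)]
  change f r ^ n ≤ 1 + f r ^ (n + 1)
  rcases le_total (f r) 1 with hf1 | hf1
  · linarith [Real.rpow_le_one hr hf1 hn, Real.rpow_nonneg hr (n + 1)]
  · linarith [Real.rpow_le_rpow_of_exponent_le hf1 (le_add_of_nonneg_right zero_le_one : n ≤ n + 1)]

lemma integrableOn_eulerLagrangeSource (hc : 0 < c) (hD : 0 < D) (hq : 0 ≤ q) (hm : 0 ≤ m)
    (β a b R : ℝ) :
    IntegrableOn (eulerLagrangeSource β a b q m f) (Ioc 0 R) (radialMeasure c D) :=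
  (((h.integrableOn_rpow_of_integrable_rpow_add_one hc hD hm h.integrable_rpow_m R).const_mul
      (b * (m + 1))).sub
    ((h.integrableOn_rpow_of_integrable_rpow_add_one hc hD hq h.integrable_rpow_q R).const_mul
      (a * (q + 1)))).const_mul β

lemma ae_eq_eulerLagrangeSlope_of_setIntegral_le (hc : 0 < c) (hp : 1 < p) {k : ℝ → ℝ}
    (hk : ∀ R, IntegrableOn k (Ioc 0 R) (radialMeasure c D)) {r₀ r₁ : ℝ} (hr₀ : 0 < r₀)
    (hr : r₀ ≤ r₁)
    (hle : ∫ r in Ioc r₀ r₁, flux c D k r * (eulerLagrangeSlope c D p k r - g r) ≤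
      ∫ r in Ioc r₀ r₁,
        p * (c * r ^ (D - 1)) * g r ^ (p - 1) * (eulerLagrangeSlope c D p k r - g r)) :
    g =ᵐ[volume.restrict (Ioc r₀ r₁)] eulerLagrangeSlope c D p k := by
  set G := eulerLagrangeSlope c D p k
  have hflux : IntegrableOn (fun r => flux c D k r * (G r - g r)) (Ioc r₀ r₁) :=
    IntegrableOn.continuousOn_mul_of_subset (continuous_flux hk).continuousOn
      ((integrableOn_eulerLagrangeSlope hc hp hk hr₀).sub (h.slope_integrableOn r₀ r₁ hr₀ hr))
      isCompact_Icc measurableSet_Ioc Ioc_subset_Icc_self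
  have hpower : IntegrableOn (fun r => p * (c * r ^ (D - 1)) * g r ^ (p - 1) * (G r - g r))
      (Ioc r₀ r₁) := by
    have := integrable_rpow_sub_one_mul_sub hp.le (ae_restrict_of_ae h.ae_slope_nonneg)
      (Eventually.of_forall fun _ => eulerLagrangeSlope_nonneg hc hp)
      h.slope_measurable.aemeasurable (measurable_eulerLagrangeSlope hk).aemeasurable
      h.integrable_slope_rpow.integrableOn
      (integrableOn_eulerLagrangeSlope_rpow hc hp hk hr₀ (r₁ := r₁))
    rw [← IntegrableOn, integrableOn_radialMeasure_iff hc measurableSet_Ioc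
      fun r hr => hr₀.trans hr.1] at this
    simp only [mul_assoc] at this ⊢
    exact this.const_mul p
  have hlt : ∀ r ∈ Ioc r₀ r₁, g r ≠ G r →
      p * (c * r ^ (D - 1)) * g r ^ (p - 1) * (G r - g r) < flux c D k r * (G r - g r) := by
    intro r hr hne
    have hr0 : 0 < r := hr₀.trans hr.1
    exact mul_rpow_mul_sub_lt (sub_pos.2 hp) (by positivity) (h.slope_nonneg r)
      (eulerLagrangeSlope_nonneg hc hp) (mul_eulerLagrangeSlope_rpow hc hp hr0) hne
  have hae : ∀ᵐ r ∂volume.restrict (Ioc r₀ r₁),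
      p * (c * r ^ (D - 1)) * g r ^ (p - 1) * (G r - g r) ≤ flux c D k r * (G r - g r) := by
    filter_upwards [ae_restrict_mem measurableSet_Ioc] with r hr
    rcases eq_or_ne (g r) (G r) with heq | hne
    · rw [heq, sub_self, mul_zero, mul_zero]
    · exact (hlt r hr hne).le
  filter_upwards [(integral_eq_iff_of_ae_le hpower hflux hae).1
    (le_antisymm (integral_mono_ae hpower hflux hae) hle), ae_restrict_mem measurableSet_Ioc]
    with r heq hr
  exact not_ne_iff.1 fun hne => (hlt r hr hne).ne heq

lemma congr_slope {G : ℝ → ℝ} (hc : 0 < c) (hG : ∀ r, 0 ≤ G r) (hGm : Measurable G)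
    (hgG : g =ᵐ[volume.restrict (Ioi 0)] G) : RadialProfile c D p q m f G := by
  have hloc : ∀ r s, 0 < r → g =ᵐ[volume.restrict (Ioc r s)] G := fun r s hr =>
    ae_restrict_of_ae_restrict_of_subset (fun t ht => hr.trans ht.1) hgG
  refine ⟨h.nonneg, hG, hGm,
    fun r s hr hrs => (h.slope_integrableOn r s hr hrs).congr (hloc r s hr),
    fun r s hr hrs => ?_, h.integrable_rpow_q, h.integrable_rpow_m,
    h.integrable_slope_rpow.congr ?_⟩
  · rw [h.sub_eq_setIntegral r s hr hrs, integral_congr_ae (hloc r s hr)]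
  · filter_upwards [(ae_radialMeasure_iff hc).2 hgG] with r hr
    rw [hr]

end RadialProfile

lemma ae_restrict_Ioi_of_forall_ae_restrict_Ioc {P : ℝ → Prop}
    (h : ∀ r s, 0 < r → r ≤ s → ∀ᵐ x ∂volume.restrict (Ioc r s), P x) :
    ∀ᵐ x ∂volume.restrict (Ioi 0), P x := by
  have hcover : Ioi (0 : ℝ) ⊆ ⋃ n : ℕ, Ioc (1 / ((n : ℝ) + 1)) (n + 1) := by
    intro r hr
    obtain ⟨n₀, hn₀⟩ := exists_nat_one_div_lt (mem_Ioi.1 hr)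
    obtain ⟨n₁, hn₁⟩ := exists_nat_ge r
    refine mem_iUnion.2 ⟨max n₀ n₁, (Nat.one_div_le_one_div (le_max_left n₀ n₁)).trans_lt hn₀, ?_⟩
    have : (n₁ : ℝ) ≤ (max n₀ n₁ : ℕ) := Nat.cast_le.2 (le_max_right n₀ n₁)
    linarith
  refine ae_restrict_of_ae_restrict_of_subset hcover (ae_restrict_iUnion_iff _ _ |>.2 fun n => ?_)
  have hn : (1 : ℝ) ≤ n + 1 := le_add_of_nonneg_left n.cast_nonneg
  exact h _ _ (by positivity) ((div_le_one (by positivity)).2 hn |>.trans hn)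

namespace IsNormalizedMinimizer

variable {c D p q m a b : ℝ} {f g f₁ g₁ : ℝ → ℝ} (h : IsNormalizedMinimizer c D p q m a b f g)

include h

lemma first_variation (P : QuotientParameters c D p q m a b)
    (h₁ : RadialProfile c D p q m f₁ g₁) :
    powerIntegral c D g p * (b * ((m + 1) * ∫ r, f r ^ m * (f₁ r - f r) ∂radialMeasure c D) -
        a * ((q + 1) * ∫ r, f r ^ q * (f₁ r - f r) ∂radialMeasure c D)) ≤
      p * ∫ r, g r ^ (p - 1) * (g₁ r - g r) ∂radialMeasure c D := by
  have hp := P.one_lt_p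
  have hq := P.q_nonneg
  have hm := P.m_nonneg
  have h₀ := h.profile
  have hderivM := hasDerivWithinAt_integral_rpow_convexCombination (show 1 ≤ m + 1 by linarith)
    h₀.ae_nonneg h₁.ae_nonneg h₀.aemeasurable h₁.aemeasurable h₀.integrable_rpow_m
    h₁.integrable_rpow_m
  have hderivQ := hasDerivWithinAt_integral_rpow_convexCombination (show 1 ≤ q + 1 by linarith)
    h₀.ae_nonneg h₁.ae_nonneg h₀.aemeasurable h₁.aemeasurable h₀.integrable_rpow_q
    h₁.integrable_rpow_q
  have hderivE := hasDerivWithinAt_integral_rpow_convexCombination hp.le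
    h₀.ae_slope_nonneg h₁.ae_slope_nonneg h₀.slope_measurable.aemeasurable
    h₁.slope_measurable.aemeasurable h₀.integrable_slope_rpow h₁.integrable_slope_rpow
  have hM : ∫ r, ((1 - (0 : ℝ)) * f r + 0 * f₁ r) ^ (m + 1) ∂radialMeasure c D = 1 := by
    simpa [powerIntegral] using h.powerIntegral_m
  have hQ : ∫ r, ((1 - (0 : ℝ)) * f r + 0 * f₁ r) ^ (q + 1) ∂radialMeasure c D = 1 := by
    simpa [powerIntegral] using h.powerIntegral_q
  have hE : ∫ r, ((1 - (0 : ℝ)) * g r + 0 * g₁ r) ^ p ∂radialMeasure c D =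
      powerIntegral c D g p := by simp [powerIntegral]
  have hderiv := (((hderivQ.rpow_const (p := a) (Or.inl (by rw [hQ]; exact one_ne_zero))).mul
    hderivE).sub ((hderivM.rpow_const (p := b) (Or.inl (by rw [hM]; exact one_ne_zero))).const_mul
      (powerIntegral c D g p)))
  rw [hasDerivWithinAt_iff_tendsto_slope' self_notMem_Ioi] at hderiv
  have hnonneg := ge_of_tendsto hderiv (b := 0) (by
    filter_upwards [eventually_pos_and_le_one_nhdsGT_zero] with t ht
    have := h.isQuotientLowerBound _ _ (h₀.convexCombination h₁ hp.le hq hm ht.1.le ht.2)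
    rw [slope_def_field]
    refine div_nonneg ?_ (by linarith)
    simp only [Pi.sub_apply, Pi.mul_apply, hQ, hM, hE, Real.one_rpow]
    simp only [powerIntegral] at this ⊢
    linarith)
  simp only [hQ, hM, hE, Real.one_rpow, add_sub_cancel_right] at hnonneg
  linarith

lemma integral_eulerLagrangeSource_mul_sub_le (P : QuotientParameters c D p q m a b)
    (h₁ : RadialProfile c D p q m f₁ g₁) :
    ∫ r, eulerLagrangeSource (powerIntegral c D g p) a b q m f r * (f₁ r - f r)
        ∂radialMeasure c D ≤
      p * ∫ r, g r ^ (p - 1) * (g₁ r - g r) ∂radialMeasure c D := by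
  have hq := P.q_nonneg
  have hm := P.m_nonneg
  have h₀ := h.profile
  have hM := integrable_rpow_sub_one_mul_sub (show 1 ≤ m + 1 by linarith) h₀.ae_nonneg
    h₁.ae_nonneg h₀.aemeasurable h₁.aemeasurable h₀.integrable_rpow_m h₁.integrable_rpow_m
  have hQ := integrable_rpow_sub_one_mul_sub (show 1 ≤ q + 1 by linarith) h₀.ae_nonneg
    h₁.ae_nonneg h₀.aemeasurable h₁.aemeasurable h₀.integrable_rpow_q h₁.integrable_rpow_q
  simp only [add_sub_cancel_right] at hM hQ
  refine le_of_eq_of_le ?_ (h.first_variation P h₁)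
  rw [← integral_const_mul, ← integral_const_mul, ← integral_const_mul, ← integral_const_mul,
    ← integral_sub ((hM.const_mul _).const_mul _) ((hQ.const_mul _).const_mul _),
    ← integral_const_mul]
  congr 1 with r
  rw [eulerLagrangeSource]
  ring

lemma setIntegral_flux_mul_sub_le (P : QuotientParameters c D p q m a b) {G : ℝ → ℝ} {r₀ r₁ : ℝ}
    (hr₀ : 0 < r₀) (hr : r₀ ≤ r₁) (hG : ∀ r, 0 ≤ G r) (hGm : Measurable G)
    (hGi : IntegrableOn G (Ioc r₀ r₁))
    (hGp : IntegrableOn (fun r => G r ^ p) (Ioc r₀ r₁) (radialMeasure c D)) :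
    ∫ r in Ioc r₀ r₁,
        flux c D (eulerLagrangeSource (powerIntegral c D g p) a b q m f) r * (G r - g r) ≤
      ∫ r in Ioc r₀ r₁, p * (c * r ^ (D - 1)) * g r ^ (p - 1) * (G r - g r) := by
  have hvariation := h.integral_eulerLagrangeSource_mul_sub_le P
    (h.profile.replace_slope P.c_pos P.D_pos P.q_nonneg P.m_nonneg hr₀ hr hG hGm hGi hGp)
  simp only [add_sub_cancel_left] at hvariation
  rwa [mul_integral_rpow_mul_indicator P.c_pos hr₀.le, integral_mul_tailIntegral_indicator
    (h := fun s => G s - g s)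
    (h.profile.integrableOn_eulerLagrangeSource P.c_pos P.D_pos P.q_nonneg P.m_nonneg _ _ _ _)
    (hGi.sub (h.profile.slope_integrableOn r₀ r₁ hr₀ hr))] at hvariation

lemma ae_eq_eulerLagrangeSlope (P : QuotientParameters c D p q m a b) :
    g =ᵐ[volume.restrict (Ioi 0)] eulerLagrangeSlope c D p
      (eulerLagrangeSource (powerIntegral c D g p) a b q m f) := by
  have hk := h.profile.integrableOn_eulerLagrangeSource P.c_pos P.D_pos P.q_nonneg P.m_nonneg
    (powerIntegral c D g p) a b
  refine ae_restrict_Ioi_of_forall_ae_restrict_Ioc fun r₀ r₁ hr₀ hr =>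
    h.profile.ae_eq_eulerLagrangeSlope_of_setIntegral_le P.c_pos P.one_lt_p hk hr₀ hr
      (h.setIntegral_flux_mul_sub_le P hr₀ hr
        (fun _ => eulerLagrangeSlope_nonneg P.c_pos P.one_lt_p) (measurable_eulerLagrangeSlope hk)
        (integrableOn_eulerLagrangeSlope P.c_pos P.one_lt_p hk hr₀)
        (integrableOn_eulerLagrangeSlope_rpow P.c_pos P.one_lt_p hk hr₀))

lemma congr_slope {G : ℝ → ℝ} (hc : 0 < c) (hG : ∀ r, 0 ≤ G r) (hGm : Measurable G)
    (hgG : g =ᵐ[volume.restrict (Ioi 0)] G) : IsNormalizedMinimizer c D p q m a b f G := by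
  have henergy : powerIntegral c D g p = powerIntegral c D G p := by
    refine integral_congr_ae ?_
    filter_upwards [(ae_radialMeasure_iff hc).2 hgG] with r hr
    rw [hr]
  exact ⟨h.profile.congr_slope hc hG hGm hgG, h.powerIntegral_q, h.powerIntegral_m,
    henergy ▸ h.isQuotientLowerBound⟩

lemma eulerLagrange (P : QuotientParameters c D p q m a b) :
    IsNormalizedMinimizer c D p q m a b f (eulerLagrangeSlope c D p
      (eulerLagrangeSource (powerIntegral c D g p) a b q m f)) :=
  h.congr_slope P.c_pos (fun _ => eulerLagrangeSlope_nonneg P.c_pos P.one_lt_p)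
    (measurable_eulerLagrangeSlope (h.profile.integrableOn_eulerLagrangeSource P.c_pos P.D_pos
      P.q_nonneg P.m_nonneg _ a b)) (h.ae_eq_eulerLagrangeSlope P)

end IsNormalizedMinimizer

/-! ### Regularity at the origin -/

namespace OriginGrowthLE

variable {f : ℝ → ℝ} {α : ℝ}

lemma mono {α' : ℝ} (hf : OriginGrowthLE f α) (hα : α ≤ α') : OriginGrowthLE f α' := by
  obtain ⟨C, hC⟩ := hf
  refine ⟨|C|, fun r hr hr1 => (hC r hr hr1).trans ?_⟩
  have : r ^ (-α) ≤ r ^ (-α') := Real.rpow_le_rpow_of_exponent_ge hr hr1 (neg_le_neg hα)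
  gcongr
  exact le_abs_self C

lemma rpow {n : ℝ} (hf : OriginGrowthLE f α) (hn : 0 ≤ n) (hf0 : ∀ r, 0 < r → 0 ≤ f r) :
    OriginGrowthLE (fun r => f r ^ n) (n * α) := by
  obtain ⟨C, hC⟩ := hf
  refine ⟨|C| ^ n, fun r hr hr1 => ?_⟩
  have hle : f r ≤ |C| * r ^ (-α) := (hC r hr hr1).trans (by gcongr; exact le_abs_self C)
  calc f r ^ n ≤ (|C| * r ^ (-α)) ^ n := Real.rpow_le_rpow (hf0 r hr) hle hn
    _ = |C| ^ n * r ^ (-(n * α)) := by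
        rw [Real.mul_rpow (abs_nonneg C) (by positivity), ← Real.rpow_mul hr.le, neg_mul,
          mul_comm α n]

lemma of_le_mul {k : ℝ → ℝ} {B : ℝ} (hf : OriginGrowthLE f α) (hB : 0 ≤ B)
    (hk : ∀ r, 0 < r → k r ≤ B * f r) : OriginGrowthLE k α := by
  obtain ⟨C, hC⟩ := hf
  refine ⟨B * C, fun r hr hr1 => (hk r hr).trans ?_⟩
  rw [mul_assoc]
  exact mul_le_mul_of_nonneg_left (hC r hr hr1) hB

end OriginGrowthLE

lemma originGrowthLE_eulerLagrangeSource {f : ℝ → ℝ} {β a b q m α : ℝ} (hf : OriginGrowthLE f α)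
    (hf0 : ∀ r, 0 < r → 0 ≤ f r) (hβ : 0 ≤ β) (ha : 0 ≤ a) (hb : 0 ≤ b) (hq : 0 ≤ q)
    (hm : 0 ≤ m) : OriginGrowthLE (eulerLagrangeSource β a b q m f) (m * α) := by
  refine (hf.rpow hm hf0).of_le_mul (B := β * (b * (m + 1))) (by positivity) fun r hr => ?_
  have := hf0 r hr
  have : 0 ≤ β * (a * (q + 1) * f r ^ q) := by positivity
  simp only [eulerLagrangeSource]
  linarith

lemma flux_le_of_originGrowth {c D C r t : ℝ} {k : ℝ → ℝ} (hc : 0 < c)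
    (hk : IntegrableOn k (Ioc 0 r) (radialMeasure c D)) (ht : t < D) (hr : 0 ≤ r) (hr1 : r ≤ 1)
    (hC : ∀ s, 0 < s → s ≤ 1 → k s ≤ C * s ^ (-t)) :
    flux c D k r ≤ C * (c / (D - t) * r ^ (D - t)) := by
  rw [← setIntegral_Ioc_rpow_radialMeasure hc hr ht, ← integral_const_mul]
  exact setIntegral_mono_on hk ((integrableOn_Ioc_rpow_radialMeasure hc hr ht).const_mul C)
    measurableSet_Ioc fun s hs => hC s hs.1 (hs.2.trans hr1)

lemma originGrowthLE_eulerLagrangeSlope {c D p t : ℝ} {k : ℝ → ℝ} (hkt : OriginGrowthLE k t)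
    (hc : 0 < c) (hp : 1 < p) (hk : ∀ R, IntegrableOn k (Ioc 0 R) (radialMeasure c D))
    (ht : t < D) : OriginGrowthLE (eulerLagrangeSlope c D p k) ((t - 1) / (p - 1)) := by
  obtain ⟨C, hC⟩ := hkt
  have : 0 < p := zero_lt_one.trans hp
  have : 0 < p - 1 := sub_pos.2 hp
  have : 0 < D - t := sub_pos.2 ht
  refine ⟨(|C| / (p * (D - t))) ^ (1 / (p - 1)), fun r hr hr1 => ?_⟩
  have hflux : flux c D k r ≤ |C| * (c / (D - t) * r ^ (D - t)) := by
    refine (flux_le_of_originGrowth hc (hk r) ht hr.le hr1 hC).trans ?_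
    gcongr
    exact le_abs_self C
  have hbase : max (flux c D k r) 0 / (p * (c * r ^ (D - 1))) ≤
      |C| / (p * (D - t)) * r ^ (-(t - 1)) := by
    rw [div_le_iff₀ (by positivity)]
    refine (max_le hflux (by positivity)).trans_eq ?_
    rw [show D - t = -(t - 1) + (D - 1) by ring, Real.rpow_add hr]
    field_simp
  calc eulerLagrangeSlope c D p k r
      ≤ (|C| / (p * (D - t)) * r ^ (-(t - 1))) ^ (1 / (p - 1)) :=
        Real.rpow_le_rpow (by positivity) hbase (by positivity)
    _ = (|C| / (p * (D - t))) ^ (1 / (p - 1)) * r ^ (-((t - 1) / (p - 1))) := by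
        rw [Real.mul_rpow (by positivity) (by positivity), ← Real.rpow_mul hr.le, mul_one_div,
          neg_div]

lemma continuous_eulerLagrangeSlope_of_originGrowthLE {c D p t : ℝ} {k : ℝ → ℝ}
    (hc : 0 < c) (hp : 1 < p) (hk : ∀ R, IntegrableOn k (Ioc 0 R) (radialMeasure c D))
    (hgrowth : OriginGrowthLE (eulerLagrangeSlope c D p k) t) (ht : t < 0) :
    Continuous (eulerLagrangeSlope c D p k) := by
  refine continuous_iff_continuousAt.2 fun r => ?_
  rcases lt_trichotomy r 0 with hr | rfl | hr
  · refine (continuousAt_const (y := (0 : ℝ))).congr ?_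
    filter_upwards [Iio_mem_nhds hr] with s hs
    exact (eulerLagrangeSlope_of_nonpos hp.ne' (le_of_lt hs)).symm
  · obtain ⟨C, hC⟩ := hgrowth
    have hlim : Tendsto (fun r : ℝ => |C| * |r| ^ (-t)) (𝓝 0) (𝓝 0) := by
      have hcont : Continuous fun r : ℝ => |C| * |r| ^ (-t) :=
        continuous_const.mul (continuous_abs.rpow_const fun _ => Or.inr (by linarith))
      simpa [Real.zero_rpow (neg_ne_zero.2 ht.ne)] using hcont.tendsto 0
    rw [ContinuousAt, eulerLagrangeSlope_of_nonpos hp.ne' le_rfl]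
    refine squeeze_zero' (Eventually.of_forall fun _ => eulerLagrangeSlope_nonneg hc hp) ?_ hlim
    filter_upwards [Iio_mem_nhds one_pos] with s hs
    rcases le_or_gt s 0 with hs0 | hs0
    · rw [eulerLagrangeSlope_of_nonpos hp.ne' hs0]
      positivity
    · rw [abs_of_pos hs0]
      refine (hC s hs0 (le_of_lt hs)).trans ?_
      gcongr
      exact le_abs_self C
  · exact (continuousOn_eulerLagrangeSlope hc hp hk).continuousAt (Ioi_mem_nhds hr)

namespace RadialProfile

variable {c D p q m : ℝ} {f g : ℝ → ℝ} (h : RadialProfile c D p q m f g)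

include h

lemma originGrowthLE_zero_of_slope {t : ℝ} (ht : t < 1) (hg : OriginGrowthLE g t) :
    OriginGrowthLE f 0 := by
  obtain ⟨C, hC⟩ := hg
  have hint : IntegrableOn (fun s : ℝ => |C| * s ^ (-t)) (Ioc 0 1) :=
    ((intervalIntegrable_iff_integrableOn_Ioc_of_le zero_le_one).1
      (intervalIntegral.intervalIntegrable_rpow' (by linarith))).const_mul |C|
  refine ⟨f 1 + ∫ s in Ioc 0 1, |C| * s ^ (-t), fun r hr hr1 => ?_⟩
  have hsub : Ioc r 1 ⊆ Ioc 0 1 := Ioc_subset_Ioc_left hr.le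
  have hbound : f r - f 1 ≤ ∫ s in Ioc 0 1, |C| * s ^ (-t) :=
    calc f r - f 1 = ∫ s in Ioc r 1, g s := h.sub_eq_setIntegral r 1 hr hr1
      _ ≤ ∫ s in Ioc r 1, |C| * s ^ (-t) := by
          refine setIntegral_mono_on (h.slope_integrableOn r 1 hr hr1) (hint.mono_set hsub)
            measurableSet_Ioc fun s hs => ?_
          have hs0 : 0 < s := hr.trans hs.1
          refine (hC s hs0 hs.2).trans ?_
          gcongr
          exact le_abs_self C
      _ ≤ ∫ s in Ioc 0 1, |C| * s ^ (-t) := by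
          refine setIntegral_mono_set hint ?_ hsub.eventuallyLE
          filter_upwards [ae_restrict_mem measurableSet_Ioc] with s hs
          have hs0 : 0 < s := hs.1
          exact (by positivity : 0 ≤ |C| * s ^ (-t))
  rw [neg_zero, Real.rpow_zero, mul_one]
  linarith

lemma originGrowthLE_zero_of_gain {η α₀ : ℝ} (hη : 0 < η) (hα₀ : 0 < α₀)
    (hgain : ∀ α, 0 < α → α ≤ α₀ → OriginGrowthLE f α → OriginGrowthLE g (1 + α - η))
    (hf : OriginGrowthLE f α₀) : OriginGrowthLE f 0 := by
  have hiterate : ∀ n : ℕ, ∀ α, 0 < α → α ≤ α₀ → α ≤ n * (η / 2) → OriginGrowthLE f α →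
      OriginGrowthLE f 0 := by
    intro n
    induction n with
    | zero =>
      intro α hα _ hn _
      rw [Nat.cast_zero, zero_mul] at hn
      exact absurd hn hα.not_ge
    | succ n ih =>
      intro α hα hαα₀ hn hfα
      push_cast at hn
      have hg := hgain α hα hαα₀ hfα
      rcases le_or_gt α (η / 2) with hsmall | hlarge
      · exact h.originGrowthLE_zero_of_slope (by linarith) hg
      · exact ih (α - η / 2) (by linarith) (by linarith) (by linarith)
          (h.originGrowthLE_of_slope (by linarith) (hg.mono (by linarith)))
  obtain ⟨n, hn⟩ := exists_nat_ge (α₀ / (η / 2))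
  exact hiterate n α₀ hα₀ le_rfl ((div_le_iff₀ (by positivity)).1 hn) hf

end RadialProfile

namespace OriginExponent

variable {D p m α : ℝ} (hα : OriginExponent D p m α)

include hα

lemma exists_gain (hp : 1 < p) :
    ∃ η, 0 < η ∧ ∀ x, 0 ≤ x → x ≤ α → (m * x - 1) / (p - 1) ≤ 1 + x - η := by
  have hp1 : 0 < p - 1 := sub_pos.2 hp
  have hgap := hα.bootstrap
  refine ⟨min p (p - (m - p + 1) * α) / (p - 1),
    div_pos (lt_min (by linarith) (by linarith)) hp1, fun x hx hxα => ?_⟩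
  have hmin : min p (p - (m - p + 1) * α) ≤ p - (m - p + 1) * x := by
    rcases le_total (m - p + 1) 0 with hsign | hsign
    · exact (min_le_left _ _).trans (by nlinarith)
    · exact (min_le_right _ _).trans (by gcongr)
  rw [div_le_iff₀ hp1, sub_mul, div_mul_cancel₀ _ hp1.ne']
  linarith

lemma mul_lt {x : ℝ} (hm : 0 ≤ m) (hxα : x ≤ α) : m * x < D := by
  have := hα.integrable_rpow
  have := hα.pos
  nlinarith

end OriginExponent

namespace IsNormalizedMinimizer

variable {c D p q m a b : ℝ} {f g : ℝ → ℝ} (h : IsNormalizedMinimizer c D p q m a b f g)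

include h

lemma continuous_eulerLagrangeSlope (P : QuotientParameters c D p q m a b) {α : ℝ}
    (hα : OriginExponent D p m α) :
    Continuous (eulerLagrangeSlope c D p
      (eulerLagrangeSource (powerIntegral c D g p) a b q m f)) := by
  have hp := P.one_lt_p
  have hm := P.m_nonneg
  set k := eulerLagrangeSource (powerIntegral c D g p) a b q m f
  have hk : ∀ R, IntegrableOn k (Ioc 0 R) (radialMeasure c D) :=
    h.profile.integrableOn_eulerLagrangeSource P.c_pos P.D_pos P.q_nonneg hm _ a b
  have hslope : ∀ x, x ≤ α → OriginGrowthLE f x →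
      OriginGrowthLE (eulerLagrangeSlope c D p k) ((m * x - 1) / (p - 1)) := fun x hx hf =>
    originGrowthLE_eulerLagrangeSlope (originGrowthLE_eulerLagrangeSource hf h.profile.nonneg
      h.profile.powerIntegral_slope_nonneg P.a_pos.le P.b_pos.le P.q_nonneg hm) P.c_pos hp hk
      (hα.mul_lt hm hx)
  obtain ⟨η, hη, hgain⟩ := hα.exists_gain hp
  have hf : OriginGrowthLE f 0 :=
    (h.eulerLagrange P).profile.originGrowthLE_zero_of_gain hη hα.pos
      (fun x hx hxα hfx => (hslope x hxα hfx).mono (hgain x hx.le hxα))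
      ⟨_, fun r => h.profile.le_mul_rpow_neg P.c_pos hp.le hα.pos hα.le_energy⟩
  refine continuous_eulerLagrangeSlope_of_originGrowthLE P.c_pos hp hk (hslope 0 hα.pos.le hf) ?_
  rw [mul_zero, zero_sub]
  exact div_neg_of_neg_of_pos neg_one_lt_zero (sub_pos.2 hp)

end IsNormalizedMinimizer

lemma QuotientParameters.exists_isNormalizedMinimizer_continuous {c D p q m a b α : ℝ}
    (P : QuotientParameters c D p q m a b) (hα : OriginExponent D p m α) :
    ∃ f g, IsNormalizedMinimizer c D p q m a b f g ∧ Continuous g ∧ g 0 = 0 := by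
  obtain ⟨f, g, h⟩ := P.exists_isNormalizedMinimizer hα
  exact ⟨f, _, h.eulerLagrange P, h.continuous_eulerLagrangeSlope P hα,
    eulerLagrangeSlope_of_nonpos P.one_lt_p.ne' le_rfl⟩

lemma rpow_ae_eq_of_forall_pos {c D : ℝ} {f F : ℝ → ℝ} (hF : ∀ r, 0 < r → f r = F r) (n : ℝ) :
    (fun r => f r ^ n) =ᵐ[radialMeasure c D] fun r => F r ^ n :=
  ae_radialMeasure_of_forall_pos fun r hr => congrArg (· ^ n) (hF r hr)

lemma powerIntegral_congr {c D n : ℝ} {f F : ℝ → ℝ} (hF : ∀ r, 0 < r → f r = F r) :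
    powerIntegral c D f n = powerIntegral c D F n :=
  integral_congr_ae (rpow_ae_eq_of_forall_pos hF n)

lemma RadialProfile.congr {c D p q m : ℝ} {f F g : ℝ → ℝ} (h : RadialProfile c D p q m f g)
    (hF : ∀ r, 0 < r → f r = F r) : RadialProfile c D p q m F g := by
  refine ⟨fun r hr => hF r hr ▸ h.nonneg r hr, h.slope_nonneg, h.slope_measurable,
    h.slope_integrableOn, fun r s hr hrs => ?_,
    h.integrable_rpow_q.congr (rpow_ae_eq_of_forall_pos hF _),
    h.integrable_rpow_m.congr (rpow_ae_eq_of_forall_pos hF _), h.integrable_slope_rpow⟩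
  rw [← hF r hr, ← hF s (hr.trans_le hrs), h.sub_eq_setIntegral r s hr hrs]

lemma IsNormalizedMinimizer.congr {c D p q m a b : ℝ} {f F g : ℝ → ℝ}
    (h : IsNormalizedMinimizer c D p q m a b f g) (hF : ∀ r, 0 < r → f r = F r) :
    IsNormalizedMinimizer c D p q m a b F g :=
  ⟨h.profile.congr hF, powerIntegral_congr hF ▸ h.powerIntegral_q,
    powerIntegral_congr hF ▸ h.powerIntegral_m, h.isQuotientLowerBound⟩

lemma RadialProfile.eq_sub_intervalIntegral {c D p q m : ℝ} {f g : ℝ → ℝ}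
    (h : RadialProfile c D p q m f g) {r : ℝ} (hr : 0 < r) :
    f r = f 1 - ∫ s in (1 : ℝ)..r, g s := by
  rcases le_total r 1 with hr1 | hr1
  · rw [intervalIntegral.integral_symm, intervalIntegral.integral_of_le hr1,
      ← h.sub_eq_setIntegral r 1 hr hr1]
    ring
  · rw [intervalIntegral.integral_of_le hr1, ← h.sub_eq_setIntegral 1 r one_pos hr1]
    ring

lemma QuotientParameters.exists_isNormalizedMinimizer_hasDerivAt {c D p q m a b α : ℝ}
    (P : QuotientParameters c D p q m a b) (hα : OriginExponent D p m α) :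
    ∃ f g, IsNormalizedMinimizer c D p q m a b f g ∧ Continuous g ∧ g 0 = 0 ∧
      ∀ r, HasDerivAt f (-g r) r := by
  obtain ⟨f, g, h, hg, hg0⟩ := P.exists_isNormalizedMinimizer_continuous hα
  exact ⟨fun r => f 1 - ∫ s in (1 : ℝ)..r, g s, g,
    h.congr fun r hr => h.profile.eq_sub_intervalIntegral hr, hg, hg0,
    fun r => (hg.integral_hasStrictDerivAt 1 r).hasDerivAt.const_sub (f 1)⟩

/-! ### Radial functions -/

section RadialDifferential

variable {E : Type*} [NormedAddCommGroup E] [InnerProductSpace ℝ E] {f g : ℝ → ℝ}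

lemma hasFDerivAt_norm {x : E} (hx : x ≠ 0) :
    HasFDerivAt (fun y : E => ‖y‖) (‖x‖⁻¹ • innerSL ℝ x) x := by
  have hsqrt := (hasStrictFDerivAt_norm_sq x).hasFDerivAt.sqrt (by positivity)
  simp only [Real.sqrt_sq (norm_nonneg _)] at hsqrt
  refine hsqrt.congr_fderiv ?_
  ext y
  simp only [smul_apply, smul_eq_mul, nsmul_eq_mul, Nat.cast_ofNat]
  field_simp

/-- The differential of `x ↦ f ‖x‖` when `f` has derivative `-g` and `g 0 = 0`; at the origin it
vanishes because `innerSL ℝ 0 = 0`. -/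
noncomputable def radialDifferential (g : ℝ → ℝ) (x : E) : E →L[ℝ] ℝ :=
  (-g ‖x‖ * ‖x‖⁻¹) • innerSL ℝ x

lemma radialDifferential_zero : radialDifferential g (0 : E) = 0 := by
  rw [radialDifferential, map_zero, smul_zero]

lemma norm_radialDifferential (hg : ∀ r, 0 ≤ g r) (hg0 : g 0 = 0) (x : E) :
    ‖radialDifferential g x‖ = g ‖x‖ := by
  rcases eq_or_ne x 0 with rfl | hx
  · rw [radialDifferential_zero, norm_zero, norm_zero, hg0]
  · rw [radialDifferential, norm_smul, innerSL_apply_norm, norm_mul, norm_neg,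
      Real.norm_of_nonneg (hg _), norm_inv, norm_norm, mul_assoc,
      inv_mul_cancel₀ (norm_ne_zero_iff.2 hx), mul_one]

lemma hasFDerivAt_comp_norm (hf : ∀ r, HasDerivAt f (-g r) r) (hg0 : g 0 = 0) (x : E) :
    HasFDerivAt (fun y : E => f ‖y‖) (radialDifferential g x) x := by
  rcases eq_or_ne x 0 with rfl | hx
  · have hnorm : Tendsto (fun y : E => ‖y‖) (𝓝 0) (𝓝 0) := by
      simpa only [norm_zero] using (continuous_norm (E := E)).tendsto 0
    have hlittle := hasDerivAt_iff_isLittleO_nhds_zero.1 (hf 0)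
    rw [hg0] at hlittle
    rw [radialDifferential_zero, hasFDerivAt_iff_isLittleO_nhds_zero]
    simpa [Function.comp_def] using (hlittle.comp_tendsto hnorm).of_norm_right
  · refine ((hf ‖x‖).comp_hasFDerivAt x (hasFDerivAt_norm hx)).congr_fderiv ?_
    rw [radialDifferential, smul_smul]

lemma continuous_radialDifferential (hgc : Continuous g) (hg : ∀ r, 0 ≤ g r) (hg0 : g 0 = 0) :
    Continuous (radialDifferential g : E → E →L[ℝ] ℝ) := by
  refine continuous_iff_continuousAt.2 fun x => ?_
  rcases eq_or_ne x 0 with rfl | hx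
  · rw [ContinuousAt, radialDifferential_zero, tendsto_zero_iff_norm_tendsto_zero]
    simp only [norm_radialDifferential hg hg0]
    simpa only [norm_zero, hg0, Function.comp_def] using
      (hgc.comp (continuous_norm (E := E))).tendsto 0
  · have hcoeff : ContinuousAt (fun y : E => -g ‖y‖ * ‖y‖⁻¹) x :=
      (hgc.comp continuous_norm).continuousAt.neg.mul
        (continuous_norm.continuousAt.inv₀ (norm_ne_zero_iff.2 hx))
    exact hcoeff.smul (innerSL ℝ).continuous.continuousAt

lemma contDiff_comp_norm (hf : ∀ r, HasDerivAt f (-g r) r) (hgc : Continuous g)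
    (hg : ∀ r, 0 ≤ g r) (hg0 : g 0 = 0) : ContDiff ℝ 1 fun x : E => f ‖x‖ := by
  have hfderiv := hasFDerivAt_comp_norm (E := E) hf hg0
  rw [contDiff_one_iff_fderiv, funext fun x => (hfderiv x).fderiv]
  exact ⟨fun x => (hfderiv x).differentiableAt, continuous_radialDifferential hgc hg hg0⟩

lemma norm_fderiv_comp_norm (hf : ∀ r, HasDerivAt f (-g r) r) (hg : ∀ r, 0 ≤ g r) (hg0 : g 0 = 0)
    (x : E) : ‖fderiv ℝ (fun y : E => f ‖y‖) x‖ = g ‖x‖ := by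
  rw [(hasFDerivAt_comp_norm hf hg0 x).fderiv, norm_radialDifferential hg hg0]

end RadialDifferential

section RadialFunction

variable {E : Type*} [NormedAddCommGroup E] [NormedSpace ℝ E] [Nontrivial E] {u : E → ℝ}
  {φ : ℝ → ℝ}

lemma exists_unit_norm_smul_eq (x : E) : ∃ v : E, ‖v‖ = 1 ∧ ‖x‖ • v = x := by
  rcases eq_or_ne x 0 with rfl | hx
  · obtain ⟨v, hv⟩ := exists_norm_eq E zero_le_one
    exact ⟨v, hv, by rw [norm_zero, zero_smul]⟩
  · exact ⟨‖x‖⁻¹ • x, norm_smul_inv_norm hx, smul_inv_smul₀ (norm_ne_zero_iff.2 hx) x⟩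

lemma contDiff_of_smul_unit_eq (hu : ContDiff ℝ 1 u)
    (hφ : ∀ (v : E) (t : ℝ), ‖v‖ = 1 → u (t • v) = φ t) : ContDiff ℝ 1 φ := by
  obtain ⟨v, hv⟩ := exists_norm_eq E zero_le_one
  rw [← funext fun t => hφ v t hv]
  exact hu.comp (contDiff_id.smul contDiff_const)

lemma abs_deriv_norm_le_norm_fderiv (hu : Differentiable ℝ u)
    (hφ : ∀ (v : E) (t : ℝ), ‖v‖ = 1 → u (t • v) = φ t) (x : E) :
    |deriv φ ‖x‖| ≤ ‖fderiv ℝ u x‖ := by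
  obtain ⟨v, hv, hxv⟩ := exists_unit_norm_smul_eq x
  have hline : HasDerivAt (fun t : ℝ => t • v) v ‖x‖ := by
    simpa only [one_smul, id_eq] using (hasDerivAt_id ‖x‖).smul_const v
  have hderiv := ((hu _).hasFDerivAt.comp_hasDerivAt ‖x‖ hline).deriv
  rw [hxv, Function.comp_def, funext fun t => hφ v t hv] at hderiv
  simpa only [hderiv, hv, mul_one, Real.norm_eq_abs] using (fderiv ℝ u x).le_opNorm v

end RadialFunction

section RadialIntegral

variable {E : Type*} [NormedAddCommGroup E] [NormedSpace ℝ E] [Nontrivial E]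
  [FiniteDimensional ℝ E]

lemma pow_finrank_sub_one (r : ℝ) :
    r ^ (Module.finrank ℝ E - 1) = r ^ ((Module.finrank ℝ E : ℝ) - 1) := by
  rw [← Real.rpow_natCast, Nat.cast_sub Module.finrank_pos, Nat.cast_one]

variable [MeasurableSpace E] [BorelSpace E] (μ : Measure E) [μ.IsAddHaarMeasure]

lemma toSphere_real_univ_pos : 0 < μ.toSphere.real univ := by
  rw [Measure.toSphere_real_apply_univ]
  exact mul_pos (Nat.cast_pos.2 Module.finrank_pos)
    (ENNReal.toReal_pos (Metric.measure_ball_pos μ _ one_pos).ne' measure_ball_lt_top.ne)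

lemma integral_comp_norm_eq_integral_radialMeasure (F : ℝ → ℝ) :
    ∫ x, F ‖x‖ ∂μ = ∫ r, F r ∂radialMeasure (μ.toSphere.real univ) (Module.finrank ℝ E) := by
  rw [integral_fun_norm_addHaar, integral_radialMeasure (toSphere_real_univ_pos μ),
    Measure.toSphere_real_apply_univ, nsmul_eq_mul, smul_eq_mul, ← mul_assoc, ← integral_const_mul]
  simp only [pow_finrank_sub_one, smul_eq_mul, mul_assoc]

lemma integrable_comp_norm_iff_integrable_radialMeasure {F : ℝ → ℝ} :
    Integrable (fun x => F ‖x‖) μ ↔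
      Integrable F (radialMeasure (μ.toSphere.real univ) (Module.finrank ℝ E)) := by
  have hc := toSphere_real_univ_pos μ
  rw [integrable_fun_norm_addHaar, integrable_radialMeasure_iff hc]
  simp only [pow_finrank_sub_one, smul_eq_mul, mul_assoc]
  exact (integrable_const_mul_iff hc.ne'.isUnit _).symm

end RadialIntegral

lemma radialProfile_of_contDiff {c D p q m : ℝ} {φ : ℝ → ℝ} (hφ : ContDiff ℝ 1 φ)
    (hφ0 : ∀ r, 0 < r → 0 ≤ φ r) (hφa : AntitoneOn φ (Ioi 0))
    (hq : Integrable (fun r => φ r ^ (q + 1)) (radialMeasure c D))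
    (hm : Integrable (fun r => φ r ^ (m + 1)) (radialMeasure c D))
    (hp : Integrable (fun r => |deriv φ r| ^ p) (radialMeasure c D)) :
    RadialProfile c D p q m φ fun r => |deriv φ r| := by
  have hderiv : Continuous (deriv φ) := hφ.continuous_deriv le_rfl
  refine ⟨hφ0, fun r => abs_nonneg _, hderiv.abs.measurable,
    fun r s _ _ => hderiv.abs.integrableOn_Ioc, fun r s hr hrs => ?_, hq, hm, hp⟩
  have habs : ∀ t ∈ uIcc r s, |deriv φ t| = -deriv φ t := by
    intro t ht
    rw [uIcc_of_le hrs] at ht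
    refine abs_of_nonpos ?_
    rw [← derivWithin_of_isOpen isOpen_Ioi (mem_Ioi.2 (hr.trans_le ht.1))]
    exact hφa.derivWithin_nonpos
  rw [← intervalIntegral.integral_of_le hrs, intervalIntegral.integral_congr habs,
    intervalIntegral.integral_neg, intervalIntegral.integral_deriv_eq_sub
      (fun t _ => hφ.differentiable one_ne_zero t) (hderiv.intervalIntegrable _ _), neg_sub]

section Reduction

variable {E : Type*} [NormedAddCommGroup E] [NormedSpace ℝ E] [Nontrivial E]
  [FiniteDimensional ℝ E] [MeasurableSpace E] [BorelSpace E] {μ : Measure E} [μ.IsAddHaarMeasure]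
  {p q m : ℝ} {u : E → ℝ} {F : ℝ → ℝ}

lemma exists_radialProfile_of_contDiff (hp : 0 ≤ p) (hu : ContDiff ℝ 1 u)
    (hF0 : ∀ r, 0 ≤ r → 0 ≤ F r) (hF : AntitoneOn F (Ici 0)) (huF : ∀ x, u x = F ‖x‖)
    (hq : Integrable (fun x => |u x| ^ (q + 1)) μ) (hm : Integrable (fun x => |u x| ^ (m + 1)) μ)
    (hfderiv : Integrable (fun x => ‖fderiv ℝ u x‖ ^ p) μ) :
    ∃ f g, RadialProfile (μ.toSphere.real univ) (Module.finrank ℝ E) p q m f g ∧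
      (∀ n, powerIntegral (μ.toSphere.real univ) (Module.finrank ℝ E) f n =
        ∫ x, |u x| ^ n ∂μ) ∧
      powerIntegral (μ.toSphere.real univ) (Module.finrank ℝ E) g p ≤
        ∫ x, ‖fderiv ℝ u x‖ ^ p ∂μ := by
  -- The even extension is `C¹` on all of `ℝ`, being the restriction of `u` to a line.
  set φ : ℝ → ℝ := fun t => F |t|
  have hline : ∀ (v : E) (t : ℝ), ‖v‖ = 1 → u (t • v) = φ t := fun v t hv => by
    rw [huF, norm_smul, hv, mul_one, Real.norm_eq_abs]
  have hφ : ContDiff ℝ 1 φ := contDiff_of_smul_unit_eq hu hline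
  have hφa : AntitoneOn φ (Ioi 0) := fun r hr s hs hrs => by
    simpa only [φ, abs_of_pos (mem_Ioi.1 hr), abs_of_pos (mem_Ioi.1 hs)] using
      hF (mem_Ici_of_Ioi hr) (mem_Ici_of_Ioi hs) hrs
  have hslope : ∀ x, |deriv φ ‖x‖| ^ p ≤ ‖fderiv ℝ u x‖ ^ p := fun x =>
    Real.rpow_le_rpow (abs_nonneg _)
      (abs_deriv_norm_le_norm_fderiv (hu.differentiable one_ne_zero) hline x) hp
  have hslopei : Integrable (fun x => |deriv φ ‖x‖| ^ p) μ := by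
    refine hfderiv.mono' ?_ (Eventually.of_forall fun x => ?_)
    · exact (((hφ.continuous_deriv le_rfl).comp continuous_norm).abs.rpow_const
        fun _ => Or.inr hp).aestronglyMeasurable
    · exact (Real.norm_of_nonneg (by positivity)).trans_le (hslope x)
  have hu_abs : ∀ x, |u x| = φ ‖x‖ := fun x => by
    rw [huF, abs_of_nonneg (hF0 _ (norm_nonneg x))]
    simp only [φ, abs_norm]
  simp only [hu_abs] at hq hm ⊢
  have hiff {G : ℝ → ℝ} := integrable_comp_norm_iff_integrable_radialMeasure μ (F := G)
  refine ⟨φ, _, radialProfile_of_contDiff hφ (fun r _ => hF0 _ (abs_nonneg r)) hφa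
    (hiff.1 hq) (hiff.1 hm) (hiff.1 hslopei), fun n =>
      (integral_comp_norm_eq_integral_radialMeasure μ (φ · ^ n)).symm, ?_⟩
  rw [powerIntegral, ← integral_comp_norm_eq_integral_radialMeasure μ (|deriv φ ·| ^ p)]
  exact integral_mono hslopei hfderiv hslope

end Reduction

namespace RadialProfile

variable {c D p q m : ℝ} {f g : ℝ → ℝ} (h : RadialProfile c D p q m f g)
  (hf : ∀ r, HasDerivAt f (-g r) r)

include h hf

lemma antitone_of_hasDerivAt : Antitone f :=
  antitone_of_deriv_nonpos (fun r => (hf r).differentiableAt) fun r => by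
    rw [(hf r).deriv, neg_nonpos]
    exact h.slope_nonneg r

lemma nonneg_of_hasDerivAt (r : ℝ) : 0 ≤ f r :=
  (h.nonneg (max r 1) (by positivity)).trans (h.antitone_of_hasDerivAt hf (le_max_left r 1))

end RadialProfile

section Euclidean

variable {d : ℕ} {p q m : ℝ}

/-- The surface area of the unit sphere of `ℝ^d`, the constant `c` of the radial problem. -/
noncomputable def unitSphereArea (d : ℕ) : ℝ :=
  (volume : Measure (EuclideanSpace ℝ (Fin d))).toSphere.real univ

lemma nontrivial_euclideanSpace (hd : 1 ≤ d) : Nontrivial (EuclideanSpace ℝ (Fin d)) :=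
  Module.nontrivial_of_finrank_pos (R := ℝ) (by rwa [finrank_euclideanSpace_fin])

lemma unitSphereArea_pos (hd : 1 ≤ d) : 0 < unitSphereArea d :=
  have := nontrivial_euclideanSpace hd
  toSphere_real_univ_pos _

lemma integral_comp_norm_rpow (hd : 1 ≤ d) (f : ℝ → ℝ) (n : ℝ) :
    ∫ x : EuclideanSpace ℝ (Fin d), f ‖x‖ ^ n = powerIntegral (unitSphereArea d) d f n := by
  have := nontrivial_euclideanSpace hd
  have hradial := integral_comp_norm_eq_integral_radialMeasure
    (volume : Measure (EuclideanSpace ℝ (Fin d))) (f · ^ n)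
  rwa [finrank_euclideanSpace_fin] at hradial

lemma integrable_comp_norm_iff (hd : 1 ≤ d) {F : ℝ → ℝ} :
    Integrable (fun x : EuclideanSpace ℝ (Fin d) => F ‖x‖) ↔
      Integrable F (radialMeasure (unitSphereArea d) d) := by
  have := nontrivial_euclideanSpace hd
  have hradial := integrable_comp_norm_iff_integrable_radialMeasure
    (volume : Measure (EuclideanSpace ℝ (Fin d))) (F := F)
  rwa [finrank_euclideanSpace_fin] at hradial

lemma RadialClass.exists_radialProfile (hd : 1 ≤ d) (hp : 0 ≤ p)
    {u : EuclideanSpace ℝ (Fin d) → ℝ} (hu : RadialClass d p q m u) :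
    ∃ f g, RadialProfile (unitSphereArea d) d p q m f g ∧
      (∀ n, powerIntegral (unitSphereArea d) d f n = ∫ x, |u x| ^ n) ∧
      powerIntegral (unitSphereArea d) d g p ≤ ∫ x, ‖fderiv ℝ u x‖ ^ p := by
  have := nontrivial_euclideanSpace hd
  obtain ⟨hu1, ⟨F, hF0, hF, huF⟩, -, hq, -, hm, hfderiv⟩ := hu
  have hprofile := exists_radialProfile_of_contDiff hp hu1 hF0 hF huF hq hm hfderiv
  rwa [finrank_euclideanSpace_fin] at hprofile

variable {f g : ℝ → ℝ}

lemma RadialProfile.integral_abs_comp_norm_rpow (hd : 1 ≤ d)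
    (h : RadialProfile (unitSphereArea d) d p q m f g) (hf : ∀ r, HasDerivAt f (-g r) r) (n : ℝ) :
    ∫ x : EuclideanSpace ℝ (Fin d), |f ‖x‖| ^ n = powerIntegral (unitSphereArea d) d f n := by
  simp only [abs_of_nonneg (h.nonneg_of_hasDerivAt hf _), integral_comp_norm_rpow hd]

lemma RadialProfile.integral_norm_fderiv_comp_norm_rpow (hd : 1 ≤ d)
    (h : RadialProfile (unitSphereArea d) d p q m f g) (hf : ∀ r, HasDerivAt f (-g r) r)
    (hg0 : g 0 = 0) :
    ∫ x, ‖fderiv ℝ (fun x : EuclideanSpace ℝ (Fin d) => f ‖x‖) x‖ ^ p =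
      powerIntegral (unitSphereArea d) d g p := by
  simp only [norm_fderiv_comp_norm hf h.slope_nonneg hg0, integral_comp_norm_rpow hd]

lemma RadialProfile.radialClass_comp_norm (hd : 1 ≤ d)
    (h : RadialProfile (unitSphereArea d) d p q m f g) (hf : ∀ r, HasDerivAt f (-g r) r)
    (hgc : Continuous g) (hg0 : g 0 = 0) (hq : 0 < powerIntegral (unitSphereArea d) d f (q + 1))
    (hm : 0 < powerIntegral (unitSphereArea d) d f (m + 1)) :
    RadialClass d p q m fun x => f ‖x‖ := by
  have hnonneg := h.nonneg_of_hasDerivAt hf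
  rw [← h.integral_abs_comp_norm_rpow hd hf] at hq hm
  refine ⟨contDiff_comp_norm hf hgc h.slope_nonneg hg0,
    ⟨f, fun r _ => hnonneg r, (h.antitone_of_hasDerivAt hf).antitoneOn _, fun _ => rfl⟩,
    hq, ?_, hm, ?_, ?_⟩
  · simpa only [abs_of_nonneg (hnonneg _)] using (integrable_comp_norm_iff hd).2 h.integrable_rpow_q
  · simpa only [abs_of_nonneg (hnonneg _)] using (integrable_comp_norm_iff hd).2 h.integrable_rpow_m
  · simpa only [norm_fderiv_comp_norm hf h.slope_nonneg hg0] using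
      (integrable_comp_norm_iff hd).2 h.integrable_slope_rpow

lemma le_GNquot_of_isQuotientLowerBound {γ β : ℝ} (hd : 1 ≤ d) (hp : 0 ≤ p)
    (hβ : IsQuotientLowerBound (unitSphereArea d) d p q m ((γ - p / 2) / (q + 1))
      ((γ + p / 2) / (m + 1)) β)
    {u : EuclideanSpace ℝ (Fin d) → ℝ} (hu : RadialClass d p q m u) : β ≤ GNquot d p q m γ u := by
  obtain ⟨f, g, h, hpow, henergy⟩ := hu.exists_radialProfile hd hp
  obtain ⟨-, -, hq, -, hm, -⟩ := hu
  have hquot := hβ f g h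
  rw [hpow, hpow] at hquot
  rw [GNquot, le_div_iff₀ (Real.rpow_pos_of_pos hm _)]
  exact hquot.trans (by gcongr)

end Euclidean

/-! ### The exponents -/

section Exponents

variable {D p q m γ : ℝ}

lemma mul_sub_lt_mul_of_lt_critical (hD : p < D) (hm : m < ((p - 1) * D + p) / (D - p)) :
    (m + 1) * (D - p) < p * D := by
  rw [lt_div_iff₀ (sub_pos.2 hD)] at hm
  linarith

lemma GNquot_exponents_eq (hD : D ≠ 0) (hq : 0 ≤ q) (hqm : q < m)
    (hγ : γ = (p * (m + 1) * (q + 1) + (p / 2 - 1) * D * (m + q) - D * q * m + (p - 1) * D) /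
      (D * (m - q))) :
    (γ - p / 2) / (q + 1) = (D * p + (p - D) * (m + 1)) / (D * (m - q)) ∧
      (γ + p / 2) / (m + 1) = (D * p + (p - D) * (q + 1)) / (D * (m - q)) := by
  have hmq : m - q ≠ 0 := (sub_pos.2 hqm).ne'
  have hq1 : q + 1 ≠ 0 := by positivity
  have hm1 : m + 1 ≠ 0 := by linarith
  rw [hγ]
  constructor <;> field_simp <;> ring

lemma mul_add_sub_mul_pos {n : ℝ} (hD : 0 < D) (hp : 0 < p) (hn : 0 ≤ n) (hnm : n ≤ m + 1)
    (hm : p < D → (m + 1) * (D - p) < p * D) : 0 < D * p + (p - D) * n := by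
  rcases lt_or_ge p D with hpD | hpD
  · have := hm hpD
    nlinarith
  · have := mul_nonneg (sub_nonneg.2 hpD) hn
    positivity

lemma quotientParameters_of_subcritical {c : ℝ} (hc : 0 < c) (hD : 1 ≤ D) (hp : 1 < p)
    (hq : 0 ≤ q) (hqm : q < m) (hm : p < D → (m + 1) * (D - p) < p * D)
    (hγ : γ = (p * (m + 1) * (q + 1) + (p / 2 - 1) * D * (m + q) - D * q * m + (p - 1) * D) /
      (D * (m - q))) :
    QuotientParameters c D p q m ((γ - p / 2) / (q + 1)) ((γ + p / 2) / (m + 1)) := by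
  have hD0 : 0 < D := by linarith
  have hmq : 0 < m - q := sub_pos.2 hqm
  have hq1 : 0 < q + 1 := by positivity
  have hm1 : 0 < m + 1 := by linarith
  obtain ⟨ha, hb⟩ := GNquot_exponents_eq hD0.ne' hq hqm hγ
  refine ⟨hc, hD, hp, hq, hqm, ?_, ?_, ?_, ?_⟩
  · rw [ha]
    exact div_pos (mul_add_sub_mul_pos hD0 (by linarith) hm1.le le_rfl hm) (by positivity)
  · rw [hb]
    exact div_pos (mul_add_sub_mul_pos hD0 (by linarith) hq1.le (by linarith) hm) (by positivity)
  · field_simp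
    ring
  · rw [ha, hb]
    field_simp
    ring

lemma exists_originExponent (hD : 0 < D) (hp : 0 < p) (hm : 0 ≤ m)
    (hsub : p < D → (m + 1) * (D - p) < p * D) : ∃ α, OriginExponent D p m α := by
  rcases lt_or_ge p D with hpD | hpD
  · have hcrit := hsub hpD
    refine ⟨(D - p) / p, div_pos (sub_pos.2 hpD) hp, ?_, ?_, ?_⟩
    · exact le_of_eq (by field_simp; ring)
    · rw [← mul_div_assoc, div_lt_iff₀ hp]
      linarith
    · rw [← mul_div_assoc, div_lt_iff₀ hp]
      nlinarith
  · set α := D / (2 * (m + 1))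
    have hα : 0 < α := by positivity
    have hα' : (m + 1) * α = D / 2 := by
      simp only [α]
      field_simp
    exact ⟨α, hα, by nlinarith, by linarith, by nlinarith⟩

end Exponents

theorem stmt11_general (d : ℕ) (hd : 1 ≤ d) (p q m γ : ℝ) (hp : 1 < p) (hq0 : 0 ≤ q) (hqm : q < m)
    (hsub : p < d → m < ((p - 1) * (d : ℝ) + p) / ((d : ℝ) - p))
    (hγ : γ = (p * (m + 1) * (q + 1) + (p / 2 - 1) * (d : ℝ) * (m + q) -
      (d : ℝ) * q * m + (p - 1) * (d : ℝ)) / ((d : ℝ) * (m - q))) :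
    ∃ u₀ : EuclideanSpace ℝ (Fin d) → ℝ, RadialClass d p q m u₀ ∧
      (∫ x, |u₀ x| ^ (q + 1)) = 1 ∧ (∫ x, |u₀ x| ^ (m + 1)) = 1 ∧
      GNquot d p q m γ u₀ = (∫ x, ‖fderiv ℝ u₀ x‖ ^ p) ∧
      ∀ u : EuclideanSpace ℝ (Fin d) → ℝ, RadialClass d p q m u →
        GNquot d p q m γ u₀ ≤ GNquot d p q m γ u := by
  have hD : (1 : ℝ) ≤ d := Nat.one_le_cast.2 hd
  have hsub' : p < d → (m + 1) * (d - p) < p * d := fun h =>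
    mul_sub_lt_mul_of_lt_critical h (hsub h)
  obtain ⟨α, hα⟩ := exists_originExponent (by linarith) (by linarith) (hq0.trans hqm.le) hsub'
  have hparams := quotientParameters_of_subcritical (unitSphereArea_pos hd) hD hp hq0 hqm hsub' hγ
  obtain ⟨f, g, h, hgc, hg0, hf⟩ := hparams.exists_isNormalizedMinimizer_hasDerivAt hα
  have hq1 := (h.profile.integral_abs_comp_norm_rpow hd hf _).trans h.powerIntegral_q
  have hm1 := (h.profile.integral_abs_comp_norm_rpow hd hf _).trans h.powerIntegral_m
  have henergy := h.profile.integral_norm_fderiv_comp_norm_rpow hd hf hg0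
  have hquot : GNquot d p q m γ (fun x => f ‖x‖) = powerIntegral (unitSphereArea d) d g p := by
    rw [GNquot, hq1, hm1, henergy, Real.one_rpow, Real.one_rpow, one_mul, div_one]
  refine ⟨fun x => f ‖x‖, h.profile.radialClass_comp_norm hd hf hgc hg0
    (one_pos.trans_eq h.powerIntegral_q.symm) (one_pos.trans_eq h.powerIntegral_m.symm), hq1, hm1,
    hquot.trans henergy.symm, fun u hu => ?_⟩
  exact hquot.trans_le (le_GNquot_of_isQuotientLowerBound hd (by linarith)
    h.isQuotientLowerBound hu)

/-- Existence of a normalized minimizer of the Gagliardo-Nirenberg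
quotient `J` over the class of radially nonincreasing functions. -/
theorem stmt11 (d : ℕ) (hd : 1 ≤ d) (p q m γ : ℝ)
    (hp : max 1 (2 * (d : ℝ) / ((d : ℝ) + 2)) < p)
    (hq0 : 0 ≤ q) (hqm : q < m)
    (hsub : p < d → q < ((p - 1) * (d : ℝ) + p) / ((d : ℝ) - p) - 1 ∧
      m < ((p - 1) * (d : ℝ) + p) / ((d : ℝ) - p))
    (hγ : γ = (p * (m + 1) * (q + 1) + (p / 2 - 1) * (d : ℝ) * (m + q) -
      (d : ℝ) * q * m + (p - 1) * (d : ℝ)) / ((d : ℝ) * (m - q))) :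
    ∃ u₀ : EuclideanSpace ℝ (Fin d) → ℝ, RadialClass d p q m u₀ ∧
      (∫ x, |u₀ x| ^ (q + 1)) = 1 ∧ (∫ x, |u₀ x| ^ (m + 1)) = 1 ∧
      GNquot d p q m γ u₀ = (∫ x, ‖fderiv ℝ u₀ x‖ ^ p) ∧
      ∀ u : EuclideanSpace ℝ (Fin d) → ℝ, RadialClass d p q m u →
        GNquot d p q m γ u₀ ≤ GNquot d p q m γ u :=
  stmt11_general d hd p q m γ ((le_max_left _ _).trans_lt hp) hq0 hqm (fun h => (hsub h).2) hγ
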